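/- arXiv:2501.17214 — 2 statements merged into one kernel-verified Lean document; each statement's English description precedes it below -/
import Mathlib

section
/- Let k ≥ 1 and n ≥ k + 2, and let e_n denote the last standard basis vector of ℝ^n. Let s_1, …, s_l be (k−1)-simplices contained in the hyperplane {x ∈ ℝ^n : ⟨x, e_n⟩ = 0}, and let F_1, …, F_l ∈ ℝ^n be arbitrary forces. If the finite system of forces F = Σ_{i=1}^{l} F_i μ_{s_i} is in equilibrium, then F = B + F^h, where B is a finite sum of k-beams with symmetric coefficient matrices structural for their simplices, and F^h is a finite system of forces in equilibrium whose simplices and whose force vectors all lie in the hyperplane {x : ⟨x, e_n⟩ = 0}. -/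
open MeasureTheory Matrix
open scoped RealInnerProductSpace

noncomputable section

abbrev Euc (n : ℕ) : Type := EuclideanSpace ℝ (Fin n)

/-- The action of an `n × n` real matrix on a vector of `ℝⁿ`. -/
def matVec {n : ℕ} (A : Matrix (Fin n) (Fin n) ℝ) (v : Euc n) : Euc n :=
  Matrix.toEuclideanLin A v

/-- `wedge v w = v wᵀ − w vᵀ`. -/
def wedge {n : ℕ} (v w : Euc n) : Matrix (Fin n) (Fin n) ℝ :=
  Matrix.of fun p q => v p * w q - w p * v q

/-- `rankOne v = v vᵀ`. -/
def rankOne {n : ℕ} (v : Euc n) : Matrix (Fin n) (Fin n) ℝ :=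
  Matrix.of fun p q => v p * v q

/-- The (closed) simplex spanned by a family of points: the convex hull of its range. -/
def simplexSet {n : ℕ} {ι : Type*} (b : ι → Euc n) : Set (Euc n) :=
  convexHull ℝ (Set.range b)

/-- The barycenter of a finite family of points. -/
def bary {n : ℕ} {ι : Type*} [Fintype ι] (b : ι → Euc n) : Euc n :=
  (Fintype.card ι : ℝ)⁻¹ • ∑ i, b i

/-- The vertices of the face of the simplex `b` opposite to the vertex `i`. -/
def face {n K : ℕ} (b : Fin K → Euc n) (i : Fin K) : {j : Fin K // j ≠ i} → Euc n :=
  fun j => b j.1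

/-- The vector measure `Σᵢ Fᵢ μ_{sᵢ}` of a finite system of forces, as an
`ℝⁿ`-valued set function; here `d` is the Hausdorff dimension of the simplices. -/
def sys {n l : ℕ} {ι : Type*} (d : ℝ) (s : Fin l → ι → Euc n) (F : Fin l → Euc n) :
    Set (Euc n) → Euc n :=
  fun S => ∑ i, (μH[d] (S ∩ simplexSet (s i))).toReal • F i

/-- A finite system of forces is in equilibrium: zero net force and zero net torque. -/
def equil {n l : ℕ} {ι : Type*} [Fintype ι] (d : ℝ) (s : Fin l → ι → Euc n)
    (F : Fin l → Euc n) : Prop :=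
  (∑ i, (μH[d] (simplexSet (s i))).toReal • F i = 0) ∧
  (∑ i, (μH[d] (simplexSet (s i))).toReal • wedge (bary (s i)) (F i) = 0)

/-- `v` is the outward unit conormal of the face of `b` opposite vertex `i`. -/
def IsConormal {n K : ℕ} (b : Fin K → Euc n) (i : Fin K) (v : Euc n) : Prop :=
  v ∈ vectorSpan ℝ (Set.range b) ∧ ‖v‖ = 1 ∧
    (∀ w ∈ vectorSpan ℝ (Set.range (face b i)), ⟪v, w⟫ = 0) ∧
    ⟪v, b i - bary (face b i)⟫ < 0

open scoped Classical in
/-- The outward unit conormal of the face of `b` opposite vertex `i`. -/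
def conormal {n K : ℕ} (b : Fin K → Euc n) (i : Fin K) : Euc n :=
  if h : ∃ v, IsConormal b i v then h.choose else 0

/-- A matrix is structural for a simplex if its range is contained in the
direction space of the simplex. -/
def Structural {n : ℕ} {ι : Type*} (A : Matrix (Fin n) (Fin n) ℝ) (b : ι → Euc n) : Prop :=
  ∀ v, matVec A v ∈ vectorSpan ℝ (Set.range b)

/-- The beam `A ⊗ Beam(τ)` of a simplex `τ` with `K` vertices (so of dimension `K − 1`,
with faces of dimension `K − 2`), as an `ℝⁿ`-valued set function. -/
def beam {n K : ℕ} (A : Matrix (Fin n) (Fin n) ℝ) (b : Fin K → Euc n) :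
    Set (Euc n) → Euc n :=
  fun S => ∑ i, (μH[(K : ℝ) - 2] (S ∩ simplexSet (face b i))).toReal • matVec A (conormal b i)

/-- `G` is a finite sum of beams over simplices with `K` vertices, with symmetric
coefficient matrices that are structural for their simplices. -/
def IsBeamSum {n : ℕ} (K : ℕ) (G : Set (Euc n) → Euc n) : Prop :=
  ∃ (m : ℕ) (τ : Fin m → Fin K → Euc n) (A : Fin m → Matrix (Fin n) (Fin n) ℝ),
    (∀ j, AffineIndependent ℝ (τ j)) ∧ (∀ j, (A j).IsSymm) ∧
    (∀ j, Structural (A j) (τ j)) ∧ (G = fun S => ∑ j, beam (A j) (τ j) S)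


/-! algebraic part -/
set_option linter.unusedSectionVars false
set_option linter.unusedSimpArgs false
section Alg
open Function

variable {V Q : Type*} [AddCommGroup V] [Module ℝ V] [AddCommGroup Q] [Module ℝ Q]

/-- independence of the tuple together with the apex `e` -/
def Ind {k : ℕ} (e : V) (s : Fin k → V) : Prop := LinearIndependent ℝ (fun l => s l - e)

theorem sub_update {k : ℕ} (e : V) (s : Fin k → V) (j : Fin k) (x : V) :
    (fun l => update s j x l - e) = update (fun l => s l - e) j (x - e) := by
  funext l
  by_cases h : l = j
  · subst h; simp
  · simp [h]

theorem li_update_iff {k : ℕ} {f : Fin k → V} (hf : LinearIndependent ℝ f) (j : Fin k) (x : V) :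
    LinearIndependent ℝ (update f j x) ↔ x ∉ Submodule.span ℝ (f '' {j}ᶜ) := by
  constructor
  · intro h hx
    have := h.notMem_span_image (s := {j}ᶜ) (x := j) (by simp)
    apply this
    simp only [update_self]
    convert hx using 2
    apply Set.image_congr
    intro a ha
    have : a ≠ j := by simpa using ha
    simp [this]
  · intro hx
    rw [Fintype.linearIndependent_iff]
    intro g hg
    have key : g j • x + ∑ l ∈ Finset.univ.erase j, g l • f l = 0 := by
      rw [← Finset.add_sum_erase _ _ (Finset.mem_univ j)] at hg
      rw [← hg]
      simp only [update_self]
      congr 1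
      apply Finset.sum_congr rfl
      intro l hl
      rw [update_of_ne (Finset.ne_of_mem_erase hl)]
    have hgj : g j = 0 := by
      by_contra hne
      apply hx
      have hmem : ∑ l ∈ Finset.univ.erase j, g l • f l ∈ Submodule.span ℝ (f '' {j}ᶜ) := by
        apply Submodule.sum_mem
        intro l hl
        apply Submodule.smul_mem
        apply Submodule.subset_span
        exact ⟨l, by simpa using Finset.ne_of_mem_erase hl, rfl⟩
      have hx2 : x = -(g j)⁻¹ • ∑ l ∈ Finset.univ.erase j, g l • f l := by
        have := eq_neg_of_add_eq_zero_right key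
        rw [this]
        simp [smul_smul, hne]
      rw [hx2]
      exact Submodule.smul_mem _ _ hmem
    have h2 : ∑ l, g l • f l = 0 := by
      rw [← Finset.add_sum_erase _ _ (Finset.mem_univ j)]
      rw [hgj] at key ⊢
      simpa using key
    exact Fintype.linearIndependent_iff.1 hf g h2

theorem generic {k : ℕ} (ht : V →ₗ[ℝ] ℝ) (e : V) (s s' : Fin k → V) (hs : Ind e s) (hs' : Ind e s')
    (hH : ∀ l, ht (s l) = 0) (hH' : ∀ l, ht (s' l) = 0) (j : Fin k) :
    ∃ t, ht t = 0 ∧ Ind e (update s j t) ∧ Ind e (update s' j t) := by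
  unfold Ind at *
  simp only [sub_update, li_update_iff hs, li_update_iff hs']
  set U1 := Submodule.span ℝ ((fun l => s l - e) '' {j}ᶜ)
  set U2 := Submodule.span ℝ ((fun l => s' l - e) '' {j}ᶜ)
  have h1 : s j - e ∉ U1 := hs.notMem_span_image (s := {j}ᶜ) (x := j) (by simp)
  have h2 : s' j - e ∉ U2 := hs'.notMem_span_image (s := {j}ᶜ) (x := j) (by simp)
  by_cases h3 : s j - e ∈ U2
  · by_cases h4 : s' j - e ∈ U1
    · refine ⟨(1/2 : ℝ) • (s j + s' j), by simp [hH, hH'], ?_, ?_⟩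
      · intro h
        apply h1
        have : s j - e = (2 : ℝ) • ((1/2 : ℝ) • (s j + s' j) - e) - (s' j - e) := by module
        rw [this]
        exact U1.sub_mem (U1.smul_mem _ h) h4
      · intro h
        apply h2
        have : s' j - e = (2 : ℝ) • ((1/2 : ℝ) • (s j + s' j) - e) - (s j - e) := by module
        rw [this]
        exact U2.sub_mem (U2.smul_mem _ h) h3
    · exact ⟨s' j, hH' j, h4, h2⟩
  · exact ⟨s j, hH j, h1, h3⟩

theorem chain {k : ℕ} (ht : V →ₗ[ℝ] ℝ) (e : V) (r : (Fin k → V) → (Fin k → V) → Prop)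
    (hrefl : ∀ s, r s s) (hsymm : ∀ s t, r s t → r t s) (htr : ∀ s t u, r s t → r t u → r s u)
    (hstep : ∀ s j t, Ind e s → Ind e (update s j t) → (∀ l, ht (s l) = 0) → ht t = 0 →
      r s (update s j t))
    (s s' : Fin k → V) (hs : Ind e s) (hs' : Ind e s')
    (hH : ∀ l, ht (s l) = 0) (hH' : ∀ l, ht (s' l) = 0) : r s s' := by
  have main : ∀ A : Finset (Fin k), ∀ s s' : Fin k → V, Ind e s → Ind e s' →
      (∀ l, ht (s l) = 0) → (∀ l, ht (s' l) = 0) → (∀ l, l ∉ A → s l = s' l) → r s s' := by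
    intro A
    induction A using Finset.induction_on with
    | empty =>
      intro s s' _ _ _ _ h
      have : s = s' := funext fun l => h l (by simp)
      rw [this]; exact hrefl _
    | insert j A hj ih =>
      intro s s' hs hs' hH hH' h
      obtain ⟨t, ht0, h1, h2⟩ := generic ht e s s' hs hs' hH hH' j
      have h3 := hstep s j t hs h1 hH ht0
      have h4 := hstep s' j t hs' h2 hH' ht0
      refine htr _ _ _ h3 (htr _ _ _ ?_ (hsymm _ _ h4))
      apply ih _ _ h1 h2
      · intro l
        by_cases hl : l = j
        · subst hl; simpa using ht0
        · simpa [hl] using hH l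
      · intro l
        by_cases hl : l = j
        · subst hl; simpa using ht0
        · simpa [hl] using hH' l
      · intro l hl
        by_cases hlj : l = j
        · subst hlj; simp
        · simp only [update_of_ne hlj]
          exact h l (by simp [hlj, hl])
  exact main Finset.univ s s' hs hs' hH hH' (by simp)

theorem core_abs (F : V → V →ₗ[ℝ] Q) (P : V → V → Prop) (e : V)
    (hS : ∀ x y, P x y → F y (e - x) = F x (e - y))
    (hA : ∀ x y, P x y → F y (x - y) = F x (x - y))
    (y y' c w : V)
    (p1 : P y y') (p2 : P y' (y' - c)) (p3 : P y (y' - c))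
    (p4 : P (y + w) y) (p5 : P (y + w) y') (p6 : P (y + w - c) y) (p7 : P (y + w - c) y')
    (p8 : P (y + (2:ℝ) • w) y') (p9 : P (y + (2:ℝ) • w) (y' - c))
    (p10 : P (y' + (2:ℝ) • w) y') (p11 : P (y' + (2:ℝ) • w) (y' - c))
    (p12 : P (y + (2:ℝ) • w) (y + w)) (p13 : P (y + (2:ℝ) • w) (y + w - c))
    (p14 : P (y' + (2:ℝ) • w) (y + w)) (p15 : P (y' + (2:ℝ) • w) (y + w - c)) :
    F y c = F y' c := by
  have a1 := hA _ _ p1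
  have a2 := hA _ _ p2
  have a3 := hA _ _ p3
  have b4 := hS _ _ p4
  have b5 := hS _ _ p5
  have b6 := hS _ _ p6
  have b7 := hS _ _ p7
  have b8 := hS _ _ p8
  have b9 := hS _ _ p9
  have b10 := hS _ _ p10
  have b11 := hS _ _ p11
  have b12 := hS _ _ p12
  have b13 := hS _ _ p13
  have b14 := hS _ _ p14
  have b15 := hS _ _ p15
  clear p1 p2 p3 p4 p5 p6 p7 p8 p9 p10 p11 p12 p13 p14 p15 hS hA
  simp only [map_sub, map_add, map_smul] at *
  have X1 : F y c - F y' c = -(F y' (y - y') - F (y' - c) (y - y')) := by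
    simp only [map_sub]
    linear_combination (norm := module) a1 + a2 - a3
  have X2 : F y c - F y' c = F (y + w) (y - y') - F (y + w - c) (y - y') := by
    simp only [map_sub]
    linear_combination (norm := module) b6 - b4 - b7 + b5
  have X3 : F y' (y - y') - F (y' - c) (y - y')
      = F (y + (2:ℝ) • w) c - F (y' + (2:ℝ) • w) c := by
    simp only [map_sub]
    linear_combination (norm := module) b10 - b8 - b11 + b9
  have X4 : F (y + w) (y - y') - F (y + w - c) (y - y')
      = F (y + (2:ℝ) • w) c - F (y' + (2:ℝ) • w) c := by
    simp only [map_sub]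
    linear_combination (norm := module) b14 - b12 - b15 + b13
  have X5 : (2:ℝ) • (F y c - F y' c) = 0 := by
    rw [two_smul]
    nth_rewrite 1 [X1]
    rw [X2, X3, X4]
    abel
  have := (smul_eq_zero.1 X5).resolve_left (by norm_num)
  exact sub_eq_zero.1 this


theorem coefs {k : ℕ} {f : Fin k → V} {i j : Fin k} (hij : i ≠ j) {c w : V}
    (hcond : ∀ (g : Fin k → ℝ) (γ δ : ℝ), γ • c + δ • w + ∑ l, g l • f l = 0 →
      γ = 0 ∧ δ = 0 ∧ ∀ l, g l = 0)
    (X Y : V) (x1 x2 x3 x4 y1 y2 y3 y4 : ℝ)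
    (hX : X = x1 • f j + x2 • f i + x3 • c + x4 • w)
    (hY : Y = y1 • f j + y2 • f i + y3 • c + y4 • w)
    (hc : ∀ α β : ℝ, α * x1 + β * y1 = 0 → α * x2 + β * y2 = 0 → α * x3 + β * y3 = 0 →
      α * x4 + β * y4 = 0 → α = 0 ∧ β = 0) :
    LinearIndependent ℝ (update (update f j Y) i X) := by
  rw [Fintype.linearIndependent_iff]
  intro g hg
  have split : ∀ h : Fin k → V, ∑ l, h l = h i + h j + ∑ l ∈ (Finset.univ.erase i).erase j, h l := by
    intro h
    rw [← Finset.add_sum_erase _ _ (Finset.mem_univ i),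
      ← Finset.add_sum_erase (Finset.univ.erase i) _ (by simp [hij.symm] : j ∈ _), add_assoc]
  have rest : ∀ l ∈ (Finset.univ.erase i).erase j, l ≠ i ∧ l ≠ j := by
    intro l hl
    simp only [Finset.mem_erase] at hl
    exact ⟨hl.2.1, hl.1⟩
  have h1 := hcond (update (update g j (g i * x1 + g j * y1)) i (g i * x2 + g j * y2))
    (g i * x3 + g j * y3) (g i * x4 + g j * y4) (by
      rw [split] at hg ⊢
      have e1 : ∑ l ∈ (Finset.univ.erase i).erase j,
          update (update g j (g i * x1 + g j * y1)) i (g i * x2 + g j * y2) l • f l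
          = ∑ l ∈ (Finset.univ.erase i).erase j, g l • (update (update f j Y) i X) l := by
        apply Finset.sum_congr rfl
        intro l hl
        obtain ⟨a, b⟩ := rest l hl
        simp [a, b]
      rw [e1]
      simp only [update_self, update_of_ne hij.symm] at hg ⊢
      rw [hX, hY] at hg
      rw [← hg, hX, hY]
      module)
  obtain ⟨h3, h4, h5⟩ := h1
  have h2 := h5 i
  have h1 := h5 j
  simp only [update_self, update_of_ne hij.symm] at h1 h2
  obtain ⟨hi, hj⟩ := hc _ _ h1 h2 h3 h4
  intro l
  by_cases hli : l = i
  · rw [hli, hi]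
  by_cases hlj : l = j
  · rw [hlj, hj]
  simpa [hli, hlj] using h5 l

theorem exists_out [FiniteDimensional ℝ V] (ht : V →ₗ[ℝ] ℝ) (U : Submodule ℝ V)
    (hU : Module.finrank ℝ U < Module.finrank ℝ V) (u : V) (hu : u ∈ U) (hu' : ht u = -1) :
    ∃ c, ht c = 0 ∧ c ∉ U := by
  by_contra! h
  have : U = ⊤ := by
    rw [eq_top_iff]
    intro x _
    have h1 : x + ht x • u ∈ U := h _ (by simp [hu'])
    have := U.sub_mem h1 (U.smul_mem (ht x) hu)
    simpa using this
  rw [this, finrank_top] at hU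
  exact lt_irrefl _ hU

set_option maxHeartbeats 1000000 in
theorem core_gen {k : ℕ} [FiniteDimensional ℝ V] (hn : k + 2 ≤ Module.finrank ℝ V)
    (ht : V →ₗ[ℝ] ℝ) (e : V) (he : ht e = 1)
    (E : (Fin k → V) → V →ₗ[ℝ] Q)
    (hsymm : ∀ s (i j : Fin k), E (s ∘ Equiv.swap i j) = E s)
    (hM1 : ∀ s i, Ind e s → (∀ l, ht (s l) = 0) → E s e = E (update s i e) (e - s i))
    (hM2 : ∀ s i j, i ≠ j → Ind e s → (∀ l, ht (s l) = 0) →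
      E (update s i e) (s i - s j) = E (update (update s i e) j (s i)) (s i - s j))
    (s : Fin k → V) (hs : Ind e s) (hH : ∀ l, ht (s l) = 0) (i j : Fin k) (hij : i ≠ j)
    (v : V) (hv : ht v = 0) :
    E (update s i e) v = E (update (update s j (s i)) i e) v := by
  have hk : 0 < k := Fin.pos i
  set f : Fin k → V := fun l => s l - e with hf
  have hfi : ht (f i) = -1 := by simp [hf, hH, he]
  have hfr : Module.finrank ℝ (Submodule.span ℝ (Set.range f)) ≤ k := by
    have := finrank_range_le_card (R := ℝ) f
    rw [Fintype.card_fin] at this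
    exact this
  set F : V → V →ₗ[ℝ] Q := fun y => E (update (update s j y) i e) with hF
  set T : V → V → (Fin k → V) := fun x y => update (update s j y) i x with hT
  set P : V → V → Prop := fun x y => Ind e (T x y) ∧ ht x = 0 ∧ ht y = 0 with hP
  have Tht : ∀ x y, P x y → ∀ l, ht (T x y l) = 0 := by
    intro x y h l
    simp only [hT]
    by_cases hli : l = i
    · subst hli; simpa using h.2.1
    by_cases hlj : l = j
    · subst hlj; simpa [hli] using h.2.2
    simpa [hli, hlj] using hH l
  have g1 : ∀ x y, P x y → E (T x y) e = F y (e - x) := by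
    intro x y h
    rw [hM1 _ i h.1 (Tht _ _ h)]
    simp [hT, hF]
  have gs : ∀ x y, T x y ∘ Equiv.swap i j = T y x := by
    intro x y
    funext l
    simp only [hT, Function.comp_apply]
    by_cases hli : l = i
    · subst hli; simp [hij.symm]
    by_cases hlj : l = j
    · subst hlj; simp [hij.symm]
    rw [Equiv.swap_apply_of_ne_of_ne hli hlj]
    simp [hli, hlj]
  have Psymm : ∀ x y, P x y → P y x := by
    intro x y h
    refine ⟨?_, h.2.2, h.2.1⟩
    rw [← gs]
    exact h.1.comp _ (Equiv.injective _)
  have hS : ∀ x y, P x y → F y (e - x) = F x (e - y) := by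
    intro x y h
    rw [← g1 _ _ h, ← g1 _ _ (Psymm _ _ h), ← gs, hsymm]
  have hA : ∀ x y, P x y → F y (x - y) = F x (x - y) := by
    intro x y h
    have := hM2 (T x y) i j hij h.1 (Tht _ _ h)
    have e1 : T x y i = x := by simp [hT]
    have e2 : T x y j = y := by simp [hT, hij.symm]
    have e3 : update (T x y) i e = T e y := by simp [hT]
    have e4 : update (update (T x y) i e) j x = T e x := by
      rw [e3]
      simp only [hT]
      rw [update_comm hij, update_idem]
    rw [e1, e2, e4, e3] at this
    exact this
  have key : ∀ c, ht c = 0 → c ∉ Submodule.span ℝ (Set.range f) → F (s j) c = F (s i) c := by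
    intro c hc hcs
    obtain ⟨w, hw, hws⟩ := exists_out ht (Submodule.span ℝ (Set.range f) ⊔ Submodule.span ℝ {c})
      (by
        have h1 := Submodule.finrank_add_le_finrank_add_finrank
          (Submodule.span ℝ (Set.range f)) (Submodule.span ℝ {c})
        have h2 := finrank_span_singleton (K := ℝ) (v := c) (by
          rintro rfl; exact hcs (Submodule.zero_mem _))
        omega) (f i) (Submodule.mem_sup_left (Submodule.subset_span ⟨i, rfl⟩)) hfi
    have hcond : ∀ (g : Fin k → ℝ) (γ δ : ℝ), γ • c + δ • w + ∑ l, g l • f l = 0 →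
        γ = 0 ∧ δ = 0 ∧ ∀ l, g l = 0 := by
      intro g γ δ h
      have hsum : ∑ l, g l • f l ∈ Submodule.span ℝ (Set.range f) :=
        Submodule.sum_mem _ fun l _ => Submodule.smul_mem _ _ (Submodule.subset_span ⟨l, rfl⟩)
      have hδ : δ = 0 := by
        by_contra hne
        apply hws
        have : w = -δ⁻¹ • (∑ l, g l • f l) + (-δ⁻¹ * γ) • c := by
          have : δ • w = -(∑ l, g l • f l) - γ • c := by
            linear_combination (norm := module) h
          calc w = δ⁻¹ • (δ • w) := by simp [smul_smul, hne]
            _ = _ := by rw [this]; module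
        rw [this]
        exact Submodule.add_mem_sup (Submodule.smul_mem _ _ hsum)
          (Submodule.smul_mem _ _ (Submodule.mem_span_singleton_self c))
      subst hδ
      have hγ : γ = 0 := by
        by_contra hne
        apply hcs
        have : c = -γ⁻¹ • (∑ l, g l • f l) := by
          have : γ • c = -(∑ l, g l • f l) := by
            linear_combination (norm := module) h
          calc c = γ⁻¹ • (γ • c) := by simp [smul_smul, hne]
            _ = _ := by rw [this]; module
        rw [this]
        exact Submodule.smul_mem _ _ hsum
      subst hγ
      refine ⟨rfl, rfl, ?_⟩
      exact Fintype.linearIndependent_iff.1 hs g (by simpa using h)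
    have mk : ∀ (x y : V) (x1 x2 x3 x4 y1 y2 y3 y4 : ℝ),
        x - e = x1 • f j + x2 • f i + x3 • c + x4 • w →
        y - e = y1 • f j + y2 • f i + y3 • c + y4 • w → ht x = 0 → ht y = 0 →
        (∀ α β : ℝ, α * x1 + β * y1 = 0 → α * x2 + β * y2 = 0 → α * x3 + β * y3 = 0 →
          α * x4 + β * y4 = 0 → α = 0 ∧ β = 0) → P x y := by
      intro x y x1 x2 x3 x4 y1 y2 y3 y4 hx hy hx0 hy0 hc
      refine ⟨?_, hx0, hy0⟩
      unfold Ind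
      simp only [hT, sub_update]
      exact coefs hij hcond _ _ x1 x2 x3 x4 y1 y2 y3 y4 hx hy hc
    have zi := hH i
    have zj := hH j
    apply core_abs F P e hS hA (s j) (s i) c w
    · apply mk _ _ 1 0 0 0 0 1 0 0 <;>
        first | (simp only [hf]; module) | (simp [zi, zj, hc, hw]; done) | (intros; constructor <;> linarith)
    · apply mk _ _ 0 1 0 0 0 1 (-1) 0 <;>
        first | (simp only [hf]; module) | (simp [zi, zj, hc, hw]; done) | (intros; constructor <;> linarith)
    · apply mk _ _ 1 0 0 0 0 1 (-1) 0 <;>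
        first | (simp only [hf]; module) | (simp [zi, zj, hc, hw]; done) | (intros; constructor <;> linarith)
    · apply mk _ _ 1 0 0 1 1 0 0 0 <;>
        first | (simp only [hf]; module) | (simp [zi, zj, hc, hw]; done) | (intros; constructor <;> linarith)
    · apply mk _ _ 1 0 0 1 0 1 0 0 <;>
        first | (simp only [hf]; module) | (simp [zi, zj, hc, hw]; done) | (intros; constructor <;> linarith)
    · apply mk _ _ 1 0 (-1) 1 1 0 0 0 <;>
        first | (simp only [hf]; module) | (simp [zi, zj, hc, hw]; done) | (intros; constructor <;> linarith)
    · apply mk _ _ 1 0 (-1) 1 0 1 0 0 <;>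
        first | (simp only [hf]; module) | (simp [zi, zj, hc, hw]; done) | (intros; constructor <;> linarith)
    · apply mk _ _ 1 0 0 2 0 1 0 0 <;>
        first | (simp only [hf]; module) | (simp [zi, zj, hc, hw]; done) | (intros; constructor <;> linarith)
    · apply mk _ _ 1 0 0 2 0 1 (-1) 0 <;>
        first | (simp only [hf]; module) | (simp [zi, zj, hc, hw]; done) | (intros; constructor <;> linarith)
    · apply mk _ _ 0 1 0 2 0 1 0 0 <;>
        first | (simp only [hf]; module) | (simp [zi, zj, hc, hw]; done) | (intros; constructor <;> linarith)
    · apply mk _ _ 0 1 0 2 0 1 (-1) 0 <;>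
        first | (simp only [hf]; module) | (simp [zi, zj, hc, hw]; done) | (intros; constructor <;> linarith)
    · apply mk _ _ 1 0 0 2 1 0 0 1 <;>
        first | (simp only [hf]; module) | (simp [zi, zj, hc, hw]; done) | (intros; constructor <;> linarith)
    · apply mk _ _ 1 0 0 2 1 0 (-1) 1 <;>
        first | (simp only [hf]; module) | (simp [zi, zj, hc, hw]; done) | (intros; constructor <;> linarith)
    · apply mk _ _ 0 1 0 2 1 0 0 1 <;>
        first | (simp only [hf]; module) | (simp [zi, zj, hc, hw]; done) | (intros; constructor <;> linarith)
    · apply mk _ _ 0 1 0 2 1 0 (-1) 1 <;>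
        first | (simp only [hf]; module) | (simp [zi, zj, hc, hw]; done) | (intros; constructor <;> linarith)
  have goal' : F (s j) v = F (s i) v := by
    by_cases hvs : v ∈ Submodule.span ℝ (Set.range f)
    · obtain ⟨c, hc, hcs⟩ := exists_out ht (Submodule.span ℝ (Set.range f)) (by omega) (f i)
        (Submodule.subset_span ⟨i, rfl⟩) hfi
      have h1 := key c hc hcs
      have h2 := key (v + c) (by simp [hv, hc]) (by
        intro h
        apply hcs
        simpa using Submodule.sub_mem _ h hvs)
      rw [map_add, map_add, h1] at h2
      exact add_right_cancel h2
    · exact key v hv hvs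
  simpa [hF] using goal'

theorem alg_main {k l : ℕ} [FiniteDimensional ℝ V] (hn : k + 2 ≤ Module.finrank ℝ V) (hk : 0 < k)
    (ht : V →ₗ[ℝ] ℝ) (e : V) (he : ht e = 1)
    (E : (Fin k → V) → V →ₗ[ℝ] Q)
    (hsymm : ∀ s (i j : Fin k), E (s ∘ Equiv.swap i j) = E s)
    (hM1 : ∀ s i, Ind e s → (∀ l, ht (s l) = 0) → E s e = E (update s i e) (e - s i))
    (hM2 : ∀ s i j, i ≠ j → Ind e s → (∀ l, ht (s l) = 0) →
      E (update s i e) (s i - s j) = E (update (update s i e) j (s i)) (s i - s j))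
    (s : Fin l → Fin k → V) (hs : ∀ a, Ind e (s a)) (hH : ∀ a b, ht (s a b) = 0)
    (c : Fin l → ℝ) (hc : ∑ a, c a = 0) (hc' : ∑ a, c a • ∑ b, s a b = 0) :
    ∑ a, c a • E (s a) e = 0 := by
  have core := core_gen hn ht e he E hsymm hM1 hM2
  have B1 : ∀ s j t, Ind e s → Ind e (update s j t) → (∀ l, ht (s l) = 0) → ht t = 0 →
      ∀ i v, ht v = 0 → E (update s i e) v = E (update (update s j t) i e) v := by
    intro s j t hs hs' hH htt i v hv
    have hH' : ∀ l, ht (update s j t l) = 0 := by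
      intro l
      by_cases hl : l = j
      · subst hl; simpa using htt
      · simpa [hl] using hH l
    by_cases hij : i = j
    · subst hij; simp
    obtain ⟨x, hx, h1, h2⟩ := generic ht e s (update s j t) hs hs' hH hH' i
    have hHx : ∀ l, ht (update s i x l) = 0 := by
      intro l
      by_cases hl : l = i
      · subst hl; simpa using hx
      · simpa [hl] using hH l
    have hHx' : ∀ l, ht (update (update s j t) i x l) = 0 := by
      intro l
      by_cases hl : l = i
      · subst hl; simpa using hx
      · simpa [hl] using hH' l
    have c1 := core _ h1 hHx i j hij v hv
    have c2 := core _ h2 hHx' i j hij v hv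
    simp only [update_self, update_idem] at c1 c2
    rw [c1, c2]
    congr 2
    rw [update_comm hij, update_idem, update_comm hij, update_idem, update_idem,
      update_comm (Ne.symm hij)]
  have B3 : ∀ s s', Ind e s → Ind e s' → (∀ l, ht (s l) = 0) → (∀ l, ht (s' l) = 0) →
      ∀ i v, ht v = 0 → E (update s i e) v = E (update s' i e) v := by
    apply chain ht e (fun s s' => ∀ i v, ht v = 0 → E (update s i e) v = E (update s' i e) v)
    · intros; rfl
    · intro s t h i v hv; exact (h i v hv).symm
    · intro s t u h h' i v hv; exact (h i v hv).trans (h' i v hv)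
    · exact B1
  have B2 : ∀ s, Ind e s → (∀ l, ht (s l) = 0) → ∀ i j v, ht v = 0 →
      E (update s i e) v = E (update s j e) v := by
    intro s hs hH i j v hv
    by_cases hij : i = j
    · rw [hij]
    have c1 := core s hs hH j i (Ne.symm hij) v hv
    rw [c1, ← hsymm (update (update s i (s j)) j e) i j]
    congr 2
    funext l
    simp only [Function.comp_apply]
    by_cases hli : l = i
    · subst hli; simp
    by_cases hlj : l = j
    · subst hlj; simp [hij, Ne.symm hij]
    rw [Equiv.swap_apply_of_ne_of_ne hli hlj]
    simp [hli, hlj]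
  rcases Nat.eq_zero_or_pos l with hl | hl
  · subst hl; simp
  set s0 := s ⟨0, hl⟩ with hs0
  have is0 : Ind e s0 := hs _
  have hs0H : ∀ b, ht (s0 b) = 0 := fun b => hH _ b
  set D : V →ₗ[ℝ] Q := E (update s0 ⟨0, hk⟩ e) with hD
  have allD : ∀ s, Ind e s → (∀ l, ht (s l) = 0) → ∀ i v, ht v = 0 →
      E (update s i e) v = D v := by
    intro s hs hH i v hv
    rw [B2 s hs hH i ⟨0, hk⟩ v hv]
    exact B3 s s0 hs is0 hH hs0H _ v hv
  have fin : ∀ s s', Ind e s → Ind e s' → (∀ l, ht (s l) = 0) → (∀ l, ht (s' l) = 0) →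
      E s e - E s' e = D (∑ b, s' b - ∑ b, s b) := by
    apply chain ht e (fun s s' => E s e - E s' e = D (∑ b, s' b - ∑ b, s b))
    · intro s; simp
    · intro s t h
      rw [← neg_sub, h, ← map_neg, neg_sub]
    · intro s t u h h'
      rw [← sub_add_sub_cancel _ (E t e), h, h', ← map_add]
      congr 1
      abel
    · intro s j t hs hs' hH htt
      have hH' : ∀ l, ht (update s j t l) = 0 := by
        intro l
        by_cases hl : l = j
        · subst hl; simpa using htt
        · simpa [hl] using hH l
      rw [hM1 s j hs hH, hM1 _ j hs' hH', update_idem, ← map_sub, update_self,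
        allD s hs hH j _ (by simp [htt, hH])]
      congr 1
      rw [Finset.sum_update_of_mem (Finset.mem_univ j),
        ← Finset.add_sum_erase _ _ (Finset.mem_univ j), Finset.sdiff_singleton_eq_erase]
      abel
  have : ∑ a, c a • E (s a) e = ∑ a, c a • (E (s a) e - E s0 e) := by
    simp only [smul_sub, Finset.sum_sub_distrib, ← Finset.sum_smul, hc]
    simp
  rw [this]
  have : ∀ a, c a • (E (s a) e - E s0 e) = D (c a • (∑ b, s0 b) - c a • ∑ b, s a b) := by
    intro a
    rw [fin _ _ (hs a) is0 (hH a) hs0H, ← map_smul, smul_sub]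
  simp only [this]
  rw [← map_sum, Finset.sum_sub_distrib, hc', ← Finset.sum_smul, hc]
  simp

end Alg

section Meas
open Function

theorem bary_sub_mem {n : ℕ} {ι : Type*} [Fintype ι] (b : ι → Euc n) (j : ι) :
    bary b - b j ∈ vectorSpan ℝ (Set.range b) := by
  have hc : (Fintype.card ι : ℝ) ≠ 0 := by
    have : Nonempty ι := ⟨j⟩
    exact_mod_cast Fintype.card_ne_zero
  have : bary b - b j = (Fintype.card ι : ℝ)⁻¹ • ∑ i, (b i - b j) := by
    simp only [bary, Finset.sum_sub_distrib, smul_sub, Finset.sum_const, Finset.card_univ]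
    congr 1
    rw [← Nat.cast_smul_eq_nsmul ℝ, smul_smul, inv_mul_cancel₀ hc, one_smul]
  rw [this]
  apply Submodule.smul_mem
  apply Submodule.sum_mem
  intro i _
  exact vsub_mem_vectorSpan ℝ ⟨i, rfl⟩ ⟨j, rfl⟩

theorem face_span_le {n K : ℕ} (b : Fin K → Euc n) (i : Fin K) :
    vectorSpan ℝ (Set.range (face b i)) ≤ vectorSpan ℝ (Set.range b) := by
  apply vectorSpan_mono
  rintro _ ⟨j, rfl⟩
  exact ⟨j.1, rfl⟩

theorem exists_conormal {n K : ℕ} (b : Fin K → Euc n) (hb : AffineIndependent ℝ b)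
    (i j : Fin K) (hij : j ≠ i) : ∃ v, IsConormal b i v := by
  set U := vectorSpan ℝ (Set.range (face b i)) with hU
  have hbj : bary (face b i) - b j ∈ U := bary_sub_mem (face b i) ⟨j, hij⟩
  set x := b i - bary (face b i) with hx
  have hx2 : x = (b i - b j) - (bary (face b i) - b j) := by rw [hx]; abel
  have hxU : x ∉ U := by
    intro h
    have h1 : b i - b j ∈ U := by
      have := U.add_mem h hbj
      rw [hx2] at this
      simpa using this
    have h2 : b i ∈ affineSpan ℝ (Set.range (face b i)) := by
      have h3 : b j ∈ affineSpan ℝ (Set.range (face b i)) :=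
        subset_affineSpan ℝ _ ⟨⟨j, hij⟩, rfl⟩
      have := AffineSubspace.vadd_mem_of_mem_direction (s := affineSpan ℝ (Set.range (face b i)))
        (by rw [direction_affineSpan]; exact h1) h3
      simpa using this
    have h4 := hb.notMem_affineSpan_sdiff i Set.univ
    apply h4
    convert h2 using 2
    ext y
    constructor
    · rintro ⟨l, hl, rfl⟩
      exact ⟨⟨l, by simpa using hl⟩, rfl⟩
    · rintro ⟨l, rfl⟩
      exact ⟨l.1, by simpa using l.2, rfl⟩
  have hxT : x ∈ vectorSpan ℝ (Set.range b) := by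
    rw [hx2]
    exact Submodule.sub_mem _ (vsub_mem_vectorSpan ℝ ⟨i, rfl⟩ ⟨j, rfl⟩) (face_span_le b i hbj)
  set r := x - U.starProjection x with hr
  have hr0 : r ≠ 0 := by
    intro h
    apply hxU
    rw [sub_eq_zero.1 h]
    exact Submodule.starProjection_apply_mem _ _
  have hrU : ∀ w ∈ U, ⟪r, w⟫ = 0 := fun w hw =>
    Submodule.starProjection_inner_eq_zero (K := U) x w hw
  have hrx : ⟪r, x⟫ = ‖r‖ ^ 2 := by
    have : x = r + U.starProjection x := by rw [hr]; abel
    have h2 : ⟪r, x⟫ = ⟪r, r + U.starProjection x⟫ := congrArg _ this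
    rw [h2, inner_add_right, hrU _ (Submodule.starProjection_apply_mem _ _), add_zero,
      real_inner_self_eq_norm_sq]
  have hpos : 0 < ‖r‖ := norm_pos_iff.2 hr0
  refine ⟨(-‖r‖⁻¹) • r, ?_, ?_, ?_, ?_⟩
  · apply Submodule.smul_mem
    exact Submodule.sub_mem _ hxT (face_span_le b i (Submodule.starProjection_apply_mem _ _))
  · rw [norm_smul, norm_neg, norm_inv, norm_norm, inv_mul_cancel₀ hpos.ne']
  · intro w hw
    rw [inner_smul_left, hrU w hw, mul_zero]
  · rw [inner_smul_left, hrx]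
    simp only [RCLike.conj_to_real]
    have : -‖r‖⁻¹ * ‖r‖ ^ 2 = -‖r‖ := by field_simp
    rw [this]
    linarith

theorem conormal_spec {n K : ℕ} (b : Fin K → Euc n) (hb : AffineIndependent ℝ b)
    (i j : Fin K) (hij : j ≠ i) : IsConormal b i (conormal b i) := by
  have h := exists_conormal b hb i j hij
  unfold conormal
  rw [dif_pos h]
  exact h.choose_spec

/-- the simplex inside its direction space -/
def inner' {n k : ℕ} (s : Fin k → Euc n) (i : Fin k) (l : Fin k) : vectorSpan ℝ (Set.range s) :=
  ⟨s l - s i, vsub_mem_vectorSpan ℝ ⟨l, rfl⟩ ⟨i, rfl⟩⟩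

theorem simplex_eq {n k : ℕ} (s : Fin k → Euc n) (i : Fin k) :
    simplexSet s = (fun u : vectorSpan ℝ (Set.range s) => s i + (u : Euc n)) ''
      convexHull ℝ (Set.range (inner' s i)) := by
  let A : vectorSpan ℝ (Set.range s) →ᵃ[ℝ] Euc n :=
    AffineMap.const ℝ _ (s i) + (vectorSpan ℝ (Set.range s)).subtype.toAffineMap
  have e1 : (A : _ → Euc n) = fun u : vectorSpan ℝ (Set.range s) => s i + (u : Euc n) := by
    funext u
    simp [A]
  rw [← e1, AffineMap.image_convexHull, simplexSet, ← Set.range_comp]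
  congr 2
  funext l
  simp [inner', e1]

theorem haar_sub {n d : ℕ} (V0 : Submodule ℝ (Euc n)) (hd : Module.finrank ℝ V0 = d) :
    (μH[(d:ℝ)] : Measure V0).IsAddHaarMeasure := by
  rw [← hd]
  infer_instance

theorem haus_simplex {n k : ℕ} (s : Fin (k+1) → Euc n) (i : Fin (k+1)) :
    μH[(k:ℝ)] (simplexSet s) = μH[(k:ℝ)] (convexHull ℝ (Set.range (inner' s i))) := by
  rw [simplex_eq s i]
  apply Isometry.hausdorffMeasure_image
  · exact (IsometryEquiv.addLeft (s i)).isometry.comp isometry_subtype_coe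
  · left; positivity

theorem inner'_indep {n k : ℕ} (s : Fin (k+1) → Euc n) (hs : AffineIndependent ℝ s)
    (i : Fin (k+1)) : AffineIndependent ℝ (inner' s i) := by
  rw [affineIndependent_iff_linearIndependent_vsub ℝ _ i] at hs ⊢
  apply LinearIndependent.of_comp (vectorSpan ℝ (Set.range s)).subtype
  convert hs using 1
  funext l
  simp [inner']

theorem haus_pos {n k : ℕ} (s : Fin (k+1) → Euc n) (hs : AffineIndependent ℝ s) :
    0 < (μH[(k:ℝ)] (simplexSet s)).toReal := by
  have hfr : Module.finrank ℝ (vectorSpan ℝ (Set.range s)) = k :=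
    hs.finrank_vectorSpan (by simp)
  have hi := inner'_indep s hs 0
  rw [haus_simplex s 0]
  have hh := haar_sub _ hfr
  apply ENNReal.toReal_pos
  · apply ne_of_gt
    apply Measure.measure_pos_of_nonempty_interior
    rw [interior_convexHull_nonempty_iff_affineSpan_eq_top,
      hi.affineSpan_eq_top_iff_card_eq_finrank_add_one, hfr]
    simp
  · apply ne_of_lt
    apply IsCompact.measure_lt_top
    exact (Set.finite_range _).isCompact_convexHull _

theorem scale {n d : ℕ} (V0 : Submodule ℝ (Euc n)) (hd : Module.finrank ℝ V0 = d) (n0 n1 v : Euc n)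
    (h0 : ‖n0‖ = 1) (h1 : ‖n1‖ = 1) (hV0 : ∀ u ∈ V0, ⟪n0, u⟫ = 0)
    (hn0 : n0 ∈ V0 ⊔ Submodule.span ℝ {v}) (hn1 : n1 ∈ V0 ⊔ Submodule.span ℝ {v})
    (hv0 : ⟪n0, v⟫ < 0) (hv1 : 0 < ⟪n1, v⟫) (C : Set V0) :
    μH[(d:ℝ)] ((fun u : V0 => (u : Euc n) - (⟪n1, (u : Euc n)⟫ / ⟪n1, v⟫) • v) '' C)
      = ENNReal.ofReal (-⟪n0, v⟫ / ⟪n1, v⟫) * μH[(d:ℝ)] C := by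
  set c := ⟪n0, n1⟫ with hc
  have hc1 : 1 - c ≠ 0 := by
    intro h
    have h2 : n0 = n1 := (inner_eq_one_iff_of_norm_eq_one (𝕜 := ℝ) h0 h1).1 (by rw [← hc]; linarith)
    rw [h2] at hv0
    linarith
  have n00 : ⟪n0, n0⟫ = 1 := by rw [real_inner_self_eq_norm_sq, h0]; norm_num
  have n11 : ⟪n1, n1⟫ = 1 := by rw [real_inner_self_eq_norm_sq, h1]; norm_num
  have n10 : ⟪n1, n0⟫ = c := by rw [hc, real_inner_comm]
  set w : Euc n := v + (⟪n0, v⟫ / (1 - c)) • (n1 - n0) with hw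
  have hw0 : ⟪n0, w⟫ = 0 := by
    rw [hw, inner_add_right, inner_smul_right, inner_sub_right, n00, ← hc]
    field_simp
    ring
  have hw1 : ⟪n1, w⟫ = ⟪n1, v⟫ + ⟪n0, v⟫ := by
    rw [hw, inner_add_right, inner_smul_right, inner_sub_right, n11, n10]
    field_simp
  have hwV : w ∈ V0 := by
    have : w ∈ V0 ⊔ Submodule.span ℝ {v} := by
      apply Submodule.add_mem _ (Submodule.mem_sup_right (Submodule.mem_span_singleton_self v))
      exact Submodule.smul_mem _ _ (Submodule.sub_mem _ hn1 hn0)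
    obtain ⟨u, hu, z, hz, huz⟩ := Submodule.mem_sup.1 this
    obtain ⟨t, rfl⟩ := Submodule.mem_span_singleton.1 hz
    have h3 : t * ⟪n0, v⟫ = 0 := by
      rw [← huz, inner_add_right, hV0 u hu, inner_smul_right] at hw0
      linarith
    have ht : t = 0 := (mul_eq_zero.1 h3).resolve_right hv0.ne
    rw [← huz, ht]
    simpa using hu
  set lam : Module.Dual ℝ V0 := (-(⟪n1, v⟫)⁻¹) • ((innerₛₗ ℝ n1).comp V0.subtype) with hlam
  have hlam' : ∀ u : V0, lam u = -(⟪n1, (u : Euc n)⟫ / ⟪n1, v⟫) := by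
    intro u
    simp [hlam]
    ring
  set g := LinearMap.transvection lam ⟨w, hwV⟩ with hg
  set ρ := (Submodule.span ℝ {n1 - n0})ᗮ.reflection with hρ
  have hm : ‖n1 - n0‖ ^ 2 = 2 * (1 - c) := by
    rw [← real_inner_self_eq_norm_sq, inner_sub_left, inner_sub_right, inner_sub_right, n11, n00,
      n10, ← hc]
    ring
  have key : ∀ u : V0, ρ ((u : Euc n) - (⟪n1, (u : Euc n)⟫ / ⟪n1, v⟫) • v) = (g u : Euc n) := by
    intro u
    rw [hρ, Submodule.reflection_orthogonal_apply, Submodule.reflection_singleton_apply]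
    have e1 : ⟪n1 - n0, (u : Euc n) - (⟪n1, (u : Euc n)⟫ / ⟪n1, v⟫) • v⟫
        = (⟪n1, (u : Euc n)⟫ / ⟪n1, v⟫) * ⟪n0, v⟫ := by
      rw [inner_sub_left, inner_sub_right, inner_sub_right, inner_smul_right, inner_smul_right,
        hV0 u u.2]
      field_simp
      ring
    rw [e1]
    simp only [RCLike.ofReal_real_eq_id, id, hm]
    rw [hg, LinearMap.transvection.apply, hlam']
    simp only [Submodule.coe_add, Submodule.coe_smul, hw]
    have : (2 : ℕ) • ((⟪n1, (u : Euc n)⟫ / ⟪n1, v⟫ * ⟪n0, v⟫ / (2 * (1 - c))) • (n1 - n0))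
      = ((⟪n1, (u : Euc n)⟫ / ⟪n1, v⟫) * (⟪n0, v⟫ / (1 - c))) • (n1 - n0) := by
      rw [← Nat.cast_smul_eq_nsmul ℝ, smul_smul]
      congr 1
      push_cast
      field_simp
    rw [this]
    module
  have hh : (μH[(d:ℝ)] : Measure V0).IsAddHaarMeasure := by
    rw [← hd]
    infer_instance
  rw [← ρ.isometry.hausdorffMeasure_image (Or.inl (by positivity)), Set.image_image]
  simp only [key]
  rw [← Set.image_image (fun u : V0 => (u : Euc n)) g C,
    isometry_subtype_coe.hausdorffMeasure_image (Or.inl (by positivity)),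
    Measure.addHaar_image_linearMap, hg, LinearMap.transvection.det, hlam']
  congr 2
  simp only [hw1]
  have : 1 + -((⟪n1, v⟫ + ⟪n0, v⟫) / ⟪n1, v⟫) = -⟪n0, v⟫ / ⟪n1, v⟫ := by
    field_simp
    ring
  rw [this, abs_of_nonneg]
  exact div_nonneg (by linarith) hv1.le


theorem simplexSet_congr {n : ℕ} {ι κ : Type*} (a : ι → Euc n) (b : κ → Euc n)
    (h : Set.range a = Set.range b) : simplexSet a = simplexSet b := by
  unfold simplexSet
  rw [h]

theorem range_face_zero {n k : ℕ} (b : Euc n) (s : Fin (k+1) → Euc n) :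
    Set.range (face (Fin.cons b s : Fin (k+2) → Euc n) 0) = Set.range s := by
  ext y
  constructor
  · rintro ⟨⟨l, hl⟩, rfl⟩
    obtain ⟨m, rfl⟩ := Fin.exists_succ_eq.2 hl
    exact ⟨m, by simp [face]⟩
  · rintro ⟨m, rfl⟩
    exact ⟨⟨m.succ, Fin.succ_ne_zero m⟩, by simp [face]⟩

theorem range_face_succ {n k : ℕ} (b : Euc n) (s : Fin (k+1) → Euc n) (i : Fin (k+1)) :
    Set.range (face (Fin.cons b s : Fin (k+2) → Euc n) i.succ) = Set.range (update s i b) := by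
  ext y
  constructor
  · rintro ⟨⟨l, hl⟩, rfl⟩
    rcases Fin.eq_zero_or_eq_succ l with h | ⟨m, rfl⟩
    · subst h
      exact ⟨i, by simp [face]⟩
    · have hm : m ≠ i := fun h => hl (by rw [h])
      exact ⟨m, by simp [face, hm]⟩
  · rintro ⟨m, rfl⟩
    by_cases hm : m = i
    · subst hm
      exact ⟨⟨0, (Fin.succ_ne_zero m).symm⟩, by simp [face]⟩
    · exact ⟨⟨m.succ, fun h => hm (Fin.succ_injective _ h)⟩, by simp [face, hm]⟩

/-- the geometric data of an edge move -/
theorem edge_geom {n k : ℕ} (b : Euc n) (s : Fin (k+1) → Euc n) (i : Fin (k+1))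
    (h : AffineIndependent ℝ (Fin.cons b s : Fin (k+2) → Euc n)) :
    ⟪conormal (Fin.cons b s : Fin (k+2) → Euc n) 0, b - s i⟫ < 0 ∧
    0 < ⟪conormal (Fin.cons b s : Fin (k+2) → Euc n) i.succ, b - s i⟫ ∧
    (μH[(k:ℝ)] (simplexSet (update s i b))).toReal *
      ⟪conormal (Fin.cons b s : Fin (k+2) → Euc n) i.succ, b - s i⟫ =
    - ((μH[(k:ℝ)] (simplexSet s)).toReal *
      ⟪conormal (Fin.cons b s : Fin (k+2) → Euc n) 0, b - s i⟫) ∧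
    (∀ l, l ≠ i → ⟪conormal (Fin.cons b s : Fin (k+2) → Euc n) l.succ, b - s i⟫ = 0) := by
  set τ : Fin (k+2) → Euc n := Fin.cons b s with hτ
  have c0 := conormal_spec τ h 0 i.succ (Fin.succ_ne_zero i)
  have c1 := conormal_spec τ h i.succ 0 (Fin.succ_ne_zero i).symm
  set n0 := conormal τ 0
  set n1 := conormal τ i.succ
  have hs : AffineIndependent ℝ s := by
    have := h.comp_embedding (Fin.succEmb (k+1))
    convert this using 1
    funext l
    simp [hτ]
  set V0 := vectorSpan ℝ (Set.range s) with hV0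
  have hfr : Module.finrank ℝ V0 = k := hs.finrank_vectorSpan (by simp)
  have o0 : ∀ u ∈ V0, ⟪n0, u⟫ = 0 := by
    intro u hu
    apply c0.2.2.1
    rw [hτ, range_face_zero]
    exact hu
  have hv0 : ⟪n0, b - s i⟫ < 0 := by
    have h1 := c0.2.2.2
    have h2 := c0.2.2.1 _ (bary_sub_mem (face τ 0) ⟨i.succ, Fin.succ_ne_zero i⟩)
    have e1 : b - s i = (τ 0 - bary (face τ 0)) +
        (bary (face τ 0) - face τ 0 ⟨i.succ, Fin.succ_ne_zero i⟩) := by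
      simp [face, hτ]
    rw [e1, inner_add_right, h2]
    linarith
  have hv1 : 0 < ⟪n1, b - s i⟫ := by
    have h1 := c1.2.2.2
    have h2 := c1.2.2.1 _ (bary_sub_mem (face τ i.succ) ⟨0, (Fin.succ_ne_zero i).symm⟩)
    have e1 : b - s i = -((τ i.succ - bary (face τ i.succ)) +
        (bary (face τ i.succ) - face τ i.succ ⟨0, (Fin.succ_ne_zero i).symm⟩)) := by
      simp [face, hτ]
    rw [e1, inner_neg_right, inner_add_right, h2]
    linarith
  have hT : vectorSpan ℝ (Set.range τ) ≤ V0 ⊔ Submodule.span ℝ {b - s i} := by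
    rw [vectorSpan_range_eq_span_range_vsub_right ℝ τ i.succ, Submodule.span_le]
    rintro _ ⟨l, rfl⟩
    rcases Fin.eq_zero_or_eq_succ l with hl | ⟨m, rfl⟩
    · subst hl
      apply Submodule.mem_sup_right
      simpa [hτ] using Submodule.mem_span_singleton_self (R := ℝ) (b - s i)
    · apply Submodule.mem_sup_left
      simpa [hτ] using vsub_mem_vectorSpan ℝ (Set.mem_range_self (f := s) m)
        (Set.mem_range_self i)
  refine ⟨hv0, hv1, ?_, ?_⟩
  · have sc := scale V0 hfr n0 n1 (b - s i) c0.2.1 c1.2.1 o0 (hT c0.1) (hT c1.1) hv0 hv1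
      (convexHull ℝ (Set.range (inner' s i)))
    let A : V0 →ₗ[ℝ] Euc n :=
      V0.subtype - ((⟪n1, b - s i⟫)⁻¹ • ((innerₛₗ ℝ n1).comp V0.subtype)).smulRight (b - s i)
    have hA : ∀ u, A u = (u : Euc n) - (⟪n1, (u : Euc n)⟫ / ⟪n1, b - s i⟫) • (b - s i) := by
      intro u
      simp [A, div_eq_inv_mul]
    have e2 : simplexSet (update s i b) = (fun x => b + x) ''
        ((fun u : V0 => (u : Euc n) - (⟪n1, (u : Euc n)⟫ / ⟪n1, b - s i⟫) • (b - s i)) ''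
          convexHull ℝ (Set.range (inner' s i))) := by
      simp only [← hA]
      let A' : V0 →ᵃ[ℝ] Euc n := AffineMap.const ℝ _ b + A.toAffineMap
      have e1 : (A' : _ → Euc n) = fun u : V0 => b + A u := by
        funext u
        simp [A']
      rw [Set.image_image, ← e1, AffineMap.image_convexHull, simplexSet, ← Set.range_comp, e1]
      congr 2
      funext l
      simp only [Function.comp_apply, hA, inner']
      by_cases hl : l = i
      · subst hl
        simp
      · rw [update_of_ne hl]
        have h2 : ⟪n1, s l - b⟫ = 0 := by
          apply c1.2.2.1
          apply vsub_mem_vectorSpan ℝ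
          · exact ⟨⟨l.succ, fun h => hl (Fin.succ_injective _ h)⟩, by simp [face, hτ]⟩
          · exact ⟨⟨0, (Fin.succ_ne_zero i).symm⟩, by simp [face, hτ]⟩
        have h3 : ⟪n1, s l - s i⟫ = ⟪n1, b - s i⟫ := by
          rw [← sub_add_sub_cancel (s l) b (s i), inner_add_right, h2, zero_add]
        rw [h3, div_self hv1.ne']
        simp
    have e3 : μH[(k:ℝ)] (simplexSet (update s i b)) =
        ENNReal.ofReal (-⟪n0, b - s i⟫ / ⟪n1, b - s i⟫) * μH[(k:ℝ)] (simplexSet s) := by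
      have hiso : Isometry (fun x : Euc n => b + x) := (IsometryEquiv.addLeft b).isometry
      rw [e2, hiso.hausdorffMeasure_image (Or.inl (Nat.cast_nonneg k)),
        sc, haus_simplex s i]
    rw [e3, ENNReal.toReal_mul, ENNReal.toReal_ofReal (div_nonneg (by linarith) hv1.le)]
    field_simp
  · intro l hl
    have hl' : i.succ ≠ l.succ := fun h => hl (Fin.succ_injective _ h).symm
    have c2 := conormal_spec τ h l.succ 0 (Fin.succ_ne_zero l).symm
    apply c2.2.2.1
    apply vsub_mem_vectorSpan ℝ
    · exact ⟨⟨0, (Fin.succ_ne_zero l).symm⟩, by simp [face, hτ]⟩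
    · exact ⟨⟨i.succ, hl'⟩, by simp [face, hτ]⟩

theorem rankOne_matVec {n : ℕ} (c : ℝ) (v x : Euc n) :
    matVec (c • rankOne v) x = (c * ⟪x, v⟫) • v := by
  ext p
  simp only [matVec, rankOne, Matrix.toLpLin_apply, Matrix.mulVec, dotProduct, Matrix.smul_apply,
    Matrix.of_apply, PiLp.inner_apply, PiLp.smul_apply, smul_eq_mul, Finset.mul_sum,
    Finset.sum_mul]
  apply Finset.sum_congr rfl
  intro q _
  simp
  ring

theorem edge_beam {n k : ℕ} (b : Euc n) (s : Fin (k+1) → Euc n) (i : Fin (k+1))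
    (h : AffineIndependent ℝ (Fin.cons b s : Fin (k+2) → Euc n)) :
    IsBeamSum (k+2) (fun S =>
      ((μH[(k:ℝ)] (simplexSet s)).toReal⁻¹ * (μH[(k:ℝ)] (S ∩ simplexSet s)).toReal) • (b - s i) -
      ((μH[(k:ℝ)] (simplexSet (update s i b))).toReal⁻¹ *
        (μH[(k:ℝ)] (S ∩ simplexSet (update s i b))).toReal) • (b - s i)) := by
  obtain ⟨h0, h1, h2, h3⟩ := edge_geom b s i h
  set τ : Fin (k+2) → Euc n := Fin.cons b s with hτ
  have hs : AffineIndependent ℝ s := by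
    have := h.comp_embedding (Fin.succEmb (k+1))
    convert this using 1
    funext l
    simp [hτ]
  have hp := haus_pos s hs
  set H0 := (μH[(k:ℝ)] (simplexSet s)).toReal
  set H1 := (μH[(k:ℝ)] (simplexSet (update s i b))).toReal
  set a0 := ⟪conormal τ 0, b - s i⟫
  set a1 := ⟪conormal τ i.succ, b - s i⟫
  have hH1 : H1 ≠ 0 := by
    intro h
    rw [h] at h2
    have := mul_pos_of_neg_of_neg h0 (neg_neg_of_pos hp)
    linarith
  refine ⟨1, fun _ => τ, fun _ => (H0 * a0)⁻¹ • rankOne (b - s i), fun _ => h, ?_, ?_, ?_⟩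
  · intro _
    ext p q
    simp [rankOne, Matrix.transpose_apply, mul_comm]
  · intro _ v
    rw [rankOne_matVec]
    apply Submodule.smul_mem
    exact vsub_mem_vectorSpan ℝ ⟨0, by simp [hτ]⟩ ⟨i.succ, by simp [hτ]⟩
  · funext S
    have hd : ((k + 2 : ℕ) : ℝ) - 2 = k := by push_cast; ring
    simp only [Finset.univ_unique, Finset.sum_singleton, beam, hd, rankOne_matVec]
    rw [Fin.sum_univ_succ, Finset.sum_eq_single i]
    · rw [simplexSet_congr _ _ (range_face_zero b s), simplexSet_congr _ _ (range_face_succ b s i)]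
      change _ = _ • (((H0 * a0)⁻¹ * a0) • (b - s i)) + _ • (((H0 * a0)⁻¹ * a1) • (b - s i))
      have e1 : (H0 * a0)⁻¹ * a0 = H0⁻¹ := by
        have := h0.ne
        field_simp
      have e2 : (H0 * a0)⁻¹ * a1 = - H1⁻¹ := by
        have e3 : H0 * a0 = -(H1 * a1) := by linarith
        rw [e3]
        have := h1.ne'
        field_simp
      rw [e1, e2, smul_smul, smul_smul]
      module
    · intro l _ hl
      rw [h3 l hl]
      simp
    · simp

end Meas

section Final
open Function

theorem IsBeamSum.zero {n : ℕ} (K : ℕ) : IsBeamSum K (fun _ : Set (Euc n) => (0 : Euc n)) :=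
  ⟨0, fun i => i.elim0, fun i => i.elim0, fun i => i.elim0, fun i => i.elim0, fun i => i.elim0,
    by simp⟩

theorem IsBeamSum.add {n K : ℕ} {G G' : Set (Euc n) → Euc n} (h : IsBeamSum K G)
    (h' : IsBeamSum K G') : IsBeamSum K (fun S => G S + G' S) := by
  obtain ⟨m, τ, A, h1, h2, h3, rfl⟩ := h
  obtain ⟨m', τ', A', h1', h2', h3', rfl⟩ := h'
  refine ⟨m + m', Fin.append τ τ', Fin.append A A', ?_, ?_, ?_, ?_⟩
  · intro j
    refine Fin.addCases (fun j => ?_) (fun j => ?_) j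
    · simpa using h1 j
    · simpa using h1' j
  · intro j
    refine Fin.addCases (fun j => ?_) (fun j => ?_) j
    · simpa using h2 j
    · simpa using h2' j
  · intro j
    refine Fin.addCases (fun j => ?_) (fun j => ?_) j
    · simpa using h3 j
    · simpa using h3' j
  · funext S
    rw [Fin.sum_univ_add]
    simp

theorem matVec_smul {n : ℕ} (c : ℝ) (A : Matrix (Fin n) (Fin n) ℝ) (v : Euc n) :
    matVec (c • A) v = c • matVec A v := by
  simp [matVec]

theorem IsBeamSum.smul {n K : ℕ} {G : Set (Euc n) → Euc n} (c : ℝ) (h : IsBeamSum K G) :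
    IsBeamSum K (fun S => c • G S) := by
  obtain ⟨m, τ, A, h1, h2, h3, rfl⟩ := h
  refine ⟨m, τ, fun j => c • A j, h1, ?_, ?_, ?_⟩
  · intro j
    exact (h2 j).smul c
  · intro j v
    rw [matVec_smul]
    exact Submodule.smul_mem _ _ (h3 j v)
  · funext S
    simp only [beam, Finset.smul_sum, matVec_smul]
    refine Finset.sum_congr rfl fun j _ => Finset.sum_congr rfl fun i _ => ?_
    rw [smul_comm]

theorem wedge_add {n : ℕ} (u v w : Euc n) : wedge u (v + w) = wedge u v + wedge u w := by
  ext p q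
  simp [wedge]
  ring

theorem wedge_smul {n : ℕ} (u : Euc n) (c : ℝ) (v : Euc n) : wedge u (c • v) = c • wedge u v := by
  ext p q
  simp [wedge]
  ring

/-- set functions together with net force and net torque -/
abbrev Mom (n : ℕ) : Type := (Set (Euc n) → Euc n) × Euc n × Matrix (Fin n) (Fin n) ℝ

/-- normalized force on a simplex -/
def E0 {n k : ℕ} (s : Fin (k+1) → Euc n) : Euc n →ₗ[ℝ] Mom n where
  toFun φ := (fun S => ((μH[(k:ℝ)] (simplexSet s)).toReal⁻¹ *
    (μH[(k:ℝ)] (S ∩ simplexSet s)).toReal) • φ, φ, wedge (bary s) φ)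
  map_add' x y := by
    refine Prod.ext ?_ (Prod.ext rfl (wedge_add _ _ _))
    funext S
    simp [smul_add]
  map_smul' c x := by
    refine Prod.ext ?_ (Prod.ext rfl (wedge_smul _ _ _))
    funext S
    simp only [RingHom.id_apply, Prod.smul_mk, Pi.smul_apply]
    rw [smul_comm]

/-- the good elements -/
def WW (n k : ℕ) (en : Euc n) : Submodule ℝ (Mom n) where
  carrier := {m | ∃ (B : Set (Euc n) → Euc n), IsBeamSum (k + 2) B ∧
      ∃ (l₂ : ℕ) (s₂ : Fin l₂ → Fin (k + 1) → Euc n) (F₂ : Fin l₂ → Euc n),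
        (∀ i, AffineIndependent ℝ (s₂ i)) ∧
        (∀ i, simplexSet (s₂ i) ⊆ {x : Euc n | ⟪x, en⟫ = 0}) ∧
        (∀ i, ⟪F₂ i, en⟫ = 0) ∧
        m = (fun S => B S + sys (k : ℝ) s₂ F₂ S,
          ∑ i, (μH[(k:ℝ)] (simplexSet (s₂ i))).toReal • F₂ i,
          ∑ i, (μH[(k:ℝ)] (simplexSet (s₂ i))).toReal • wedge (bary (s₂ i)) (F₂ i))}
  zero_mem' := by
    refine ⟨_, IsBeamSum.zero _, 0, fun i => i.elim0, fun i => i.elim0, fun i => i.elim0,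
      fun i => i.elim0, fun i => i.elim0, ?_⟩
    refine Prod.ext ?_ (Prod.ext ?_ ?_)
    · funext S
      simp [sys]
    · simp
    · simp
  add_mem' := by
    rintro _ _ ⟨B, hB, l₂, s₂, F₂, h1, h2, h3, rfl⟩ ⟨B', hB', l₂', s₂', F₂', h1', h2', h3', rfl⟩
    refine ⟨_, hB.add hB', l₂ + l₂', Fin.append s₂ s₂', Fin.append F₂ F₂', ?_, ?_, ?_, ?_⟩
    · intro j
      refine Fin.addCases (fun j => ?_) (fun j => ?_) j
      · simpa using h1 j
      · simpa using h1' j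
    · intro j
      refine Fin.addCases (fun j => ?_) (fun j => ?_) j
      · simpa only [Fin.append_left] using h2 j
      · simpa only [Fin.append_right] using h2' j
    · intro j
      refine Fin.addCases (fun j => ?_) (fun j => ?_) j
      · simpa only [Fin.append_left] using h3 j
      · simpa only [Fin.append_right] using h3' j
    · refine Prod.ext ?_ (Prod.ext ?_ ?_)
      · funext S
        simp only [Prod.mk_add_mk, Pi.add_apply, sys, Fin.sum_univ_add, Fin.append_left,
          Fin.append_right]
        abel
      · simp only [Prod.mk_add_mk, Fin.sum_univ_add, Fin.append_left, Fin.append_right]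
      · simp only [Prod.mk_add_mk, Fin.sum_univ_add, Fin.append_left, Fin.append_right]
  smul_mem' := by
    rintro c _ ⟨B, hB, l₂, s₂, F₂, h1, h2, h3, rfl⟩
    refine ⟨_, hB.smul c, l₂, s₂, fun i => c • F₂ i, h1, h2, ?_, ?_⟩
    · intro i
      rw [inner_smul_left, h3 i, mul_zero]
    · refine Prod.ext ?_ (Prod.ext ?_ ?_)
      · funext S
        simp only [Prod.smul_mk, Pi.smul_apply, sys, smul_add, Finset.smul_sum]
        congr 1
        exact Finset.sum_congr rfl fun i _ => smul_comm _ _ _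
      · simp only [Prod.smul_mk, Finset.smul_sum]
        exact Finset.sum_congr rfl fun i _ => smul_comm _ _ _
      · simp only [Prod.smul_mk, Finset.smul_sum, wedge_smul]
        exact Finset.sum_congr rfl fun i _ => smul_comm _ _ _

theorem edge_mem {n k : ℕ} (en : Euc n) (b : Euc n) (s : Fin (k+1) → Euc n) (i : Fin (k+1))
    (h : AffineIndependent ℝ (Fin.cons b s : Fin (k+2) → Euc n)) :
    E0 s (b - s i) - E0 (update s i b) (b - s i) ∈ WW n k en := by
  refine ⟨_, edge_beam b s i h, 0, fun i => i.elim0, fun i => i.elim0, fun i => i.elim0,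
    fun i => i.elim0, fun i => i.elim0, ?_⟩
  refine Prod.ext ?_ (Prod.ext ?_ ?_)
  · funext S
    simp [sys, E0]
  · simp [E0]
  · have hb : bary (update s i b) = bary s + ((k:ℝ)+1)⁻¹ • (b - s i) := by
      simp only [bary, Fintype.card_fin]
      rw [Finset.sum_update_of_mem (Finset.mem_univ i),
        ← Finset.add_sum_erase _ s (Finset.mem_univ i), Finset.sdiff_singleton_eq_erase]
      push_cast
      module
    simp only [E0, LinearMap.coe_mk, AddHom.coe_mk, Prod.mk_sub_mk, hb]
    ext p q
    simp [wedge]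
    ring

theorem hor_mem {n k : ℕ} (en : Euc n) (s : Fin (k+1) → Euc n) (hs : AffineIndependent ℝ s)
    (hp : ∀ l, ⟪s l, en⟫ = 0) (φ : Euc n) (hφ : ⟪φ, en⟫ = 0) : E0 s φ ∈ WW n k en := by
  have hH := (haus_pos s hs).ne'
  refine ⟨_, IsBeamSum.zero _, 1, fun _ => s,
    fun _ => (μH[(k:ℝ)] (simplexSet s)).toReal⁻¹ • φ, fun _ => hs, ?_, ?_, ?_⟩
  · intro _
    apply convexHull_min
    · rintro _ ⟨l, rfl⟩
      exact hp l
    · have : IsLinearMap ℝ (fun x : Euc n => ⟪x, en⟫) :=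
        ⟨fun x y => inner_add_left x y en, fun c x => by simp [inner_smul_left]⟩
      exact convex_hyperplane this 0
  · intro _
    rw [inner_smul_left, hφ, mul_zero]
  · refine Prod.ext ?_ (Prod.ext ?_ ?_)
    · funext S
      simp only [E0, sys, LinearMap.coe_mk, AddHom.coe_mk, Finset.univ_unique,
        Finset.sum_singleton, zero_add, smul_smul]
      rw [mul_comm]
    · simp only [E0, LinearMap.coe_mk, AddHom.coe_mk, Finset.univ_unique,
        Finset.sum_singleton, smul_smul]
      rw [mul_inv_cancel₀ hH, one_smul]
    · simp only [E0, LinearMap.coe_mk, AddHom.coe_mk, Finset.univ_unique,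
        Finset.sum_singleton, wedge_smul, smul_smul]
      rw [mul_inv_cancel₀ hH, one_smul]

theorem ind_iff {n k : ℕ} (e : Euc n) (s : Fin (k+1) → Euc n) :
    AffineIndependent ℝ (Fin.cons e s : Fin (k+2) → Euc n) ↔ Ind e s := by
  rw [affineIndependent_iff_linearIndependent_vsub ℝ _ 0, Ind,
    ← linearIndependent_equiv (finSuccAboveEquiv (0 : Fin (k+2)))]
  apply iff_of_eq
  congr 1

theorem E0_perm {n k : ℕ} (s : Fin (k+1) → Euc n) (σ : Equiv.Perm (Fin (k+1))) :
    E0 (s ∘ σ) = E0 s := by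
  have h1 : simplexSet (s ∘ σ) = simplexSet s := by
    apply simplexSet_congr
    rw [EquivLike.range_comp]
  have h2 : bary (s ∘ σ) = bary s := by
    simp only [bary, Function.comp_apply]
    rw [Equiv.sum_comp σ s]
  ext1 φ
  simp only [E0, h1, h2]

theorem ind_of_plane {n k : ℕ} (en : Euc n) (hen : ⟪en, en⟫ = 1) (s : Fin (k+1) → Euc n)
    (hs : AffineIndependent ℝ s) (hp : ∀ l, ⟪s l, en⟫ = 0) : Ind en s := by
  rw [Ind, Fintype.linearIndependent_iff]
  intro g hg
  have h1 : ∑ l, g l = 0 := by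
    have h2 : ⟪∑ l, g l • (s l - en), en⟫ = 0 := by rw [hg, inner_zero_left]
    simp only [sum_inner, inner_smul_left, inner_sub_left, hp, hen] at h2
    simpa using h2
  have h3 : ∑ l, g l • s l = 0 := by
    simp only [smul_sub, Finset.sum_sub_distrib, ← Finset.sum_smul, h1, zero_smul, sub_zero] at hg
    exact hg
  intro l
  exact (affineIndependent_iff.1 hs) Finset.univ g h1 h3 l (Finset.mem_univ l)

theorem plane_aff {n k : ℕ} (e : Euc n) (s : Fin (k+1) → Euc n) (h : Ind e s) :
    AffineIndependent ℝ s := by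
  have := ((ind_iff e s).2 h).comp_embedding (Fin.succEmb (k+1))
  convert this using 1
  funext l
  simp

theorem vertical {n k l : ℕ} (hn : k + 3 ≤ n) (en : Euc n) (hen : ⟪en, en⟫ = 1)
    (s : Fin l → Fin (k + 1) → Euc n) (hs : ∀ i, AffineIndependent ℝ (s i))
    (hp : ∀ i j, ⟪s i j, en⟫ = 0) (c : Fin l → ℝ) (hc : ∑ a, c a = 0)
    (hc' : ∑ a, c a • ∑ b, s a b = 0) :
    ∑ a, c a • E0 (s a) en ∈ WW n k en := by
  let ht : Euc n →ₗ[ℝ] ℝ := innerₛₗ ℝ en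
  have hht : ∀ x, ht x = ⟪x, en⟫ := fun x => by
    simp only [ht, innerₛₗ_apply_apply]
    exact real_inner_comm _ _
  have main := alg_main (V := Euc n) (k := k+1) (l := l) (by simpa using hn) (Nat.succ_pos k) ht en
    (by rw [hht, hen]) (fun t : Fin (k+1) → Euc n => (WW n k en).mkQ.comp (E0 t))
    (by
      intro t i j
      simp only [E0_perm])
    (by
      intro t i hi hpl
      simp only [hht] at hpl
      have h1 := edge_mem en en t i ((ind_iff en t).2 hi)
      have h2 := hor_mem en t (plane_aff en t hi) hpl (t i) (hpl i)
      simp only [LinearMap.comp_apply, Submodule.mkQ_apply]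
      rw [Submodule.Quotient.eq]
      have h3 := Submodule.add_mem _ h1 h2
      convert h3 using 1
      rw [map_sub (E0 t)]
      abel)
    (by
      intro t i j hij hi hpl
      have ha : AffineIndependent ℝ (Fin.cons (t i) (update t i en) : Fin (k+2) → Euc n) := by
        have h1 := ((ind_iff en t).2 hi).comp_embedding (Equiv.swap 0 i.succ).toEmbedding
        convert h1 using 1
        funext m
        rcases Fin.eq_zero_or_eq_succ m with hm | ⟨m, rfl⟩
        · subst hm
          simp
        · by_cases hm : m = i
          · subst hm
            simp
          · have : m.succ ≠ i.succ := fun h => hm (Fin.succ_injective _ h)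
            simp [hm, Equiv.swap_apply_of_ne_of_ne (Fin.succ_ne_zero m) this]
      have h1 := edge_mem en (t i) (update t i en) j ha
      simp only [LinearMap.comp_apply, Submodule.mkQ_apply]
      rw [Submodule.Quotient.eq]
      rwa [update_of_ne hij.symm] at h1)
    s (fun a => ind_of_plane en hen (s a) (hs a) (hp a)) (fun a b => by rw [hht, hp])
    c hc hc'
  rw [← Submodule.Quotient.mk_eq_zero, ← Submodule.mkQ_apply, map_sum]
  simpa only [map_smul, LinearMap.comp_apply] using main

end Final

/-- (Proposition 2.)  With `k = k' + 1 ≥ 1` and `n ≥ k + 2`, an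
equilibrium system of arbitrary forces on `(k−1)`-simplices lying in the hyperplane
`{x : ⟪x, eₙ⟫ = 0}` splits as `F = B + Fʰ`, with `B` a finite sum of `k`-beams and
`Fʰ` an equilibrium system whose simplices and forces all lie in the hyperplane. -/
theorem statement6 {k' n l : ℕ} (hn : k' + 3 ≤ n)
    (en : Euc n) (hen : en = EuclideanSpace.single (⟨n - 1, by omega⟩ : Fin n) 1)
    (s : Fin l → Fin (k' + 1) → Euc n) (hs : ∀ i, AffineIndependent ℝ (s i))
    (hplane : ∀ i, simplexSet (s i) ⊆ {x : Euc n | ⟪x, en⟫ = 0})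
    (F : Fin l → Euc n)
    (hequil : equil (k' : ℝ) s F) :
    ∃ (B : Set (Euc n) → Euc n), IsBeamSum (k' + 2) B ∧
      ∃ (l₂ : ℕ) (s₂ : Fin l₂ → Fin (k' + 1) → Euc n) (F₂ : Fin l₂ → Euc n),
        (∀ i, AffineIndependent ℝ (s₂ i)) ∧
        (∀ i, simplexSet (s₂ i) ⊆ {x : Euc n | ⟪x, en⟫ = 0}) ∧
        (∀ i, ⟪F₂ i, en⟫ = 0) ∧
        equil (k' : ℝ) s₂ F₂ ∧
        sys (k' : ℝ) s F = fun S => B S + sys (k' : ℝ) s₂ F₂ S := by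
  have hp : ∀ i j, ⟪s i j, en⟫ = 0 := fun i j =>
    hplane i (subset_convexHull ℝ _ ⟨j, rfl⟩)
  have hco : ∀ x : Euc n, ⟪x, en⟫ = x ⟨n - 1, by omega⟩ := by
    intro x
    rw [hen, EuclideanSpace.inner_single_right]
    simp
  have hee : ⟪en, en⟫ = 1 := by
    rw [hco, hen]
    simp
  obtain ⟨hq1, hq2⟩ := hequil
  set H : Fin l → ℝ := fun i => (μH[(k':ℝ)] (simplexSet (s i))).toReal with hH
  have hHpos : ∀ i, H i ≠ 0 := fun i => (haus_pos (s i) (hs i)).ne'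
  have hc : ∑ i, H i * ⟪F i, en⟫ = 0 := by
    have h2 : ⟪∑ i, H i • F i, en⟫ = 0 := by
      rw [show ∑ i, H i • F i = 0 from hq1, inner_zero_left]
    simpa only [sum_inner, inner_smul_left, RCLike.conj_to_real] using h2
  have hc' : ∑ i, (H i * ⟪F i, en⟫) • ∑ j, s i j = 0 := by
    ext p
    have h2 := congrFun (congrFun hq2 p) ⟨n - 1, by omega⟩
    rw [Matrix.sum_apply] at h2
    simp only [Matrix.smul_apply, wedge, Matrix.of_apply, ← hco, Matrix.zero_apply] at h2
    have hb : ∀ i, ⟪bary (s i), en⟫ = 0 := by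
      intro i
      simp [bary, inner_smul_left, sum_inner, hp]
    simp only [hb, mul_zero, sub_zero] at h2
    simp only [bary, Fintype.card_fin, PiLp.smul_apply, smul_eq_mul] at h2
    have hk : ((k' : ℝ) + 1) ≠ 0 := by positivity
    have h3 : ((k' : ℝ) + 1) * ∑ i, H i * (((k' + 1 : ℕ) : ℝ)⁻¹ * (∑ j, s i j).ofLp p * ⟪F i, en⟫)
        = 0 := by
      rw [show (∑ i, H i * (((k' + 1 : ℕ) : ℝ)⁻¹ * (∑ j, s i j).ofLp p * ⟪F i, en⟫)) = 0 from h2,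
        mul_zero]
    rw [Finset.mul_sum] at h3
    simp only [WithLp.ofLp_sum, Finset.sum_apply, PiLp.smul_apply, smul_eq_mul, PiLp.zero_apply]
    rw [← h3]
    refine Finset.sum_congr rfl fun i _ => ?_
    push_cast
    simp only [WithLp.ofLp_sum, Finset.sum_apply, PiLp.smul_apply, smul_eq_mul, PiLp.zero_apply]
    field_simp
  have hv := vertical hn en hee s hs hp _ hc hc'
  have hh : ∑ i, H i • E0 (s i) (F i - ⟪F i, en⟫ • en) ∈ WW n k' en := by
    apply Submodule.sum_mem
    intro i _
    apply Submodule.smul_mem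
    apply hor_mem en (s i) (hs i) (hp i)
    rw [inner_sub_left, inner_smul_left, hee]
    simp
  have ht := Submodule.add_mem _ hh hv
  rw [← Finset.sum_add_distrib] at ht
  have hsum : ∑ i, (H i • E0 (s i) (F i - ⟪F i, en⟫ • en) + (H i * ⟪F i, en⟫) • E0 (s i) en)
      = ((sys (k' : ℝ) s F, 0, 0) : Mom n) := by
    have h1 : ∀ i, H i • E0 (s i) (F i - ⟪F i, en⟫ • en) + (H i * ⟪F i, en⟫) • E0 (s i) en
        = H i • E0 (s i) (F i) := by
      intro i
      rw [map_sub, map_smul]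
      module
    simp only [h1]
    refine Prod.ext ?_ (Prod.ext ?_ ?_)
    · funext S
      simp only [Prod.fst_sum, Finset.sum_apply, sys]
      refine Finset.sum_congr rfl fun i _ => ?_
      simp only [E0, LinearMap.coe_mk, AddHom.coe_mk, Prod.smul_mk, Pi.smul_apply, smul_smul]
      rw [← mul_assoc, mul_inv_cancel₀ (hHpos i), one_mul]
    · simp only [Prod.snd_sum, Prod.fst_sum]
      exact hq1
    · simp only [Prod.snd_sum]
      exact hq2
  rw [hsum] at ht
  obtain ⟨B, hB, l₂, s₂, F₂, h1, h2, h3, h4⟩ := ht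
  refine ⟨B, hB, l₂, s₂, F₂, h1, h2, h3, ⟨?_, ?_⟩, ?_⟩
  · exact (congrArg (fun m : Mom n => m.2.1) h4).symm
  · exact (congrArg (fun m : Mom n => m.2.2) h4).symm
  · exact congrArg (fun m : Mom n => m.1) h4

end
end

section
/- Let k ≥ 1 and n ≥ k + 2, and let e_n denote the last standard basis vector of ℝ^n. Let s_1, …, s_l be arbitrary (k−1)-simplices in ℝ^n and F_1, …, F_l ∈ ℝ^n arbitrary forces. If the finite system of forces F = Σ_{i=1}^{l} F_i μ_{s_i} is in equilibrium, then F = B + F^h, where B is a finite sum of k-beams with symmetric coefficient matrices structural for their simplices, and F^h is a finite system of forces in equilibrium whose simplices and whose force vectors all lie in the hyperplane {x ∈ ℝ^n : ⟨x, e_n⟩ = 0}. -/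
open MeasureTheory Matrix
open scoped RealInnerProductSpace

noncomputable section

lemma gram_comb {ι κ : Type*} [Fintype ι] [Fintype κ] {n : ℕ} (P : Matrix ι κ ℝ)
    (Z : κ → Euc n) (Z' : ι → Euc n) (h : ∀ i, Z' i = ∑ j, P i j • Z j) :
    Matrix.gram ℝ Z' = P * Matrix.gram ℝ Z * Pᵀ := by
  ext i j
  simp only [Matrix.mul_apply, Matrix.gram_apply, h, sum_inner, inner_sum, inner_smul_left,
    inner_smul_right, Matrix.transpose_apply, Finset.sum_mul]
  simp only [RCLike.conj_to_real]
  refine Finset.sum_congr rfl fun x _ => ?_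
  rw [Finset.mul_sum]
  refine Finset.sum_congr rfl fun y _ => ?_
  ring

lemma gram_det_comb {ι : Type*} [Fintype ι] [DecidableEq ι] {n : ℕ} (P : Matrix ι ι ℝ)
    (Z : ι → Euc n) (Z' : ι → Euc n) (h : ∀ i, Z' i = ∑ j, P i j • Z j) :
    (Matrix.gram ℝ Z').det = P.det ^ 2 * (Matrix.gram ℝ Z).det := by
  rw [gram_comb P Z Z' h, Matrix.det_mul, Matrix.det_mul, Matrix.det_transpose]
  ring

lemma gram_normal {ι : Type*} [Fintype ι] [DecidableEq ι] {n : ℕ} (Y : ι → Euc n) (w ν : Euc n)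
    (hν : ‖ν‖ = 1) (hY : ∀ i, ⟪ν, Y i⟫ = 0)
    (hs : ∃ (a : ι → ℝ) (b : ℝ), ν = ∑ i, a i • Y i + b • w) :
    (Matrix.gram ℝ (Sum.elim Y (fun _ : Unit => w))).det = ⟪ν, w⟫ ^ 2 * (Matrix.gram ℝ Y).det := by
  obtain ⟨a, b, hab⟩ := hs
  have hb : b * ⟪ν, w⟫ = 1 := by
    have h1 : ⟪ν, ν⟫ = 1 := by rw [real_inner_self_eq_norm_sq, hν]; norm_num
    have h2 : ⟪ν, ∑ i, a i • Y i + b • w⟫ = 1 := by rw [← hab]; exact h1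
    simpa [inner_add_right, inner_sum, inner_smul_right, hY] using h2
  have h3 : (Matrix.gram ℝ (Sum.elim Y (fun _ : Unit => ν))).det = (Matrix.gram ℝ Y).det := by
    have : Matrix.gram ℝ (Sum.elim Y (fun _ : Unit => ν))
        = Matrix.fromBlocks (Matrix.gram ℝ Y) 0 0 1 := by
      ext i j
      rcases i with i | i <;> rcases j with j | j
      · simp [Matrix.gram_apply]
      · simp [Matrix.gram_apply, real_inner_comm, hY]
      · simp [Matrix.gram_apply, hY]
      · simp [Matrix.gram_apply, hν]
    rw [this, Matrix.det_fromBlocks_zero₂₁]; simp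
  have h4 := gram_det_comb (Matrix.fromBlocks (1 : Matrix ι ι ℝ) 0
    (Matrix.of fun _ i => a i) (Matrix.of fun (_ _ : Unit) => b))
    (Sum.elim Y (fun _ : Unit => w)) (Sum.elim Y (fun _ : Unit => ν)) (by
      rintro (i | i)
      · simp [Fintype.sum_sum_type, Matrix.one_apply]
      · simpa [Fintype.sum_sum_type] using hab)
  rw [h3, Matrix.det_fromBlocks_zero₁₂] at h4
  simp at h4
  rw [h4, ← mul_assoc, ← mul_pow, mul_comm ⟪ν, w⟫ b, hb]; simp

lemma gram_shift {ι : Type*} [Fintype ι] [DecidableEq ι] {n : ℕ} (Y : ι → Euc n) (w : Euc n) :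
    (Matrix.gram ℝ (Sum.elim (fun i => Y i - w) (fun _ : Unit => w))).det
      = (Matrix.gram ℝ (Sum.elim Y (fun _ : Unit => w))).det := by
  rw [gram_det_comb (Matrix.fromBlocks (1 : Matrix ι ι ℝ) (Matrix.of fun _ _ => -1)
    0 (1 : Matrix Unit Unit ℝ)) (Sum.elim Y (fun _ : Unit => w))]
  · simp
  · rintro (i | i)
    · simp [Fintype.sum_sum_type, Matrix.one_apply, sub_eq_add_neg]
    · simp [Fintype.sum_sum_type]

/-- the edge map -/
def edgeMap {n : ℕ} (σ : Finset (Euc n)) (p : Euc n) : EuclideanSpace ℝ σ →ₗ[ℝ] Euc n :=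
  (EuclideanSpace.basisFun σ ℝ).toBasis.constr ℝ (fun y : σ => (y : Euc n) - p)

def stdS {n : ℕ} (σ : Finset (Euc n)) : Set (EuclideanSpace ℝ σ) :=
  convexHull ℝ (insert 0 (Set.range (EuclideanSpace.basisFun σ ℝ)))

lemma edgeMap_basis {n : ℕ} (σ : Finset (Euc n)) (p : Euc n) (y : σ) :
    edgeMap σ p (EuclideanSpace.basisFun σ ℝ y) = y - p := by
  have := (EuclideanSpace.basisFun σ ℝ).toBasis.constr_basis ℝ (fun y : σ => (y : Euc n) - p) y
  simpa [edgeMap] using this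

open scoped Pointwise in
lemma convexHull_edge {n : ℕ} (σ : Finset (Euc n)) (p : Euc n) :
    convexHull ℝ (insert p (σ : Set (Euc n))) = p +ᵥ (edgeMap σ p '' stdS σ) := by
  rw [stdS, LinearMap.image_convexHull, ← convexHull_vadd]
  congr 1
  ext x
  simp only [Set.mem_insert_iff, Set.mem_vadd_set, Set.mem_image, Set.mem_range,
    exists_eq_or_imp, map_zero]
  constructor
  · rintro (rfl | hx)
    · exact ⟨0, Or.inl rfl, by simp⟩
    · exact ⟨_, Or.inr ⟨_, ⟨⟨x, hx⟩, rfl⟩, rfl⟩, by rw [edgeMap_basis]; simp⟩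
  · rintro ⟨z, (rfl | ⟨_, ⟨y, rfl⟩, rfl⟩), rfl⟩
    · left; simp
    · right; rw [edgeMap_basis]; simp

def cS {n : ℕ} (σ : Finset (Euc n)) : ENNReal := μH[(σ.card : ℝ)] (stdS σ)

lemma meas_simplex {n : ℕ} (σ : Finset (Euc n)) (p : Euc n) :
    μH[(σ.card : ℝ)] (convexHull ℝ (insert p (σ : Set (Euc n))))
      = ENNReal.ofReal (edgeMap σ p).normDet * cS σ := by
  rw [convexHull_edge, MeasureTheory.hausdorffMeasure_vadd p (Or.inl (by positivity)), cS]
  have := LinearMap.hausdorffMeasure_image (edgeMap σ p) (stdS σ)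
  simpa using this

lemma cS_ne {n : ℕ} (σ : Finset (Euc n)) : cS σ ≠ 0 ∧ cS σ ≠ ⊤ := by
  have hinst : (μH[(σ.card : ℝ)] : Measure (EuclideanSpace ℝ σ)).IsAddHaarMeasure := by
    have : (μH[(Module.finrank ℝ (EuclideanSpace ℝ σ) : ℝ)] :
      Measure (EuclideanSpace ℝ σ)).IsAddHaarMeasure := inferInstance
    simpa using this
  constructor
  · have h : (interior (stdS σ)).Nonempty := by
      rw [stdS, interior_convexHull_nonempty_iff_affineSpan_eq_top]
      have h1 := affineSpan_insert_zero (k := ℝ) (Set.range (EuclideanSpace.basisFun σ ℝ))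
      have h2 := (EuclideanSpace.basisFun σ ℝ).toBasis.span_eq
      rw [OrthonormalBasis.coe_toBasis] at h2
      rw [h2] at h1
      rw [← AffineSubspace.coe_eq_univ_iff, h1]; rfl
    exact (MeasureTheory.Measure.measure_pos_of_nonempty_interior _ h).ne'
  · have : IsCompact (stdS σ) := by
      apply Set.Finite.isCompact_convexHull
      exact (Set.finite_range _).insert _
    exact this.measure_ne_top

lemma normDet_sq_gram {n : ℕ} (σ : Finset (Euc n)) (p : Euc n) :
    (edgeMap σ p).normDet ^ 2 = (Matrix.gram ℝ (fun y : σ => (y : Euc n) - p)).det := by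
  have := LinearMap.normDet_sq_eq_det_gram (edgeMap σ p) (EuclideanSpace.basisFun σ ℝ)
  simp only [edgeMap_basis] at this
  simpa using this

/-- affine independence of a finite set of points -/
def AI {n : ℕ} (t : Finset (Euc n)) : Prop := AffineIndependent ℝ (fun x : t => (x : Euc n))

lemma edgeMap_pos {n : ℕ} (σ : Finset (Euc n)) (p : Euc n) (hp : p ∉ σ) 
    (h : AffineIndependent ℝ (fun x : (insert p (σ : Set (Euc n)) : Set (Euc n)) => (x : Euc n))) :
    0 < (edgeMap σ p).normDet := by
  refine lt_of_le_of_ne (LinearMap.normDet_nonneg _) (Ne.symm ?_)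
  rw [Ne, LinearMap.normDet_eq_zero_iff_ker_ne_bot, not_not, LinearMap.ker_eq_bot']
  intro x hx
  rw [affineIndependent_set_iff_linearIndependent_vsub ℝ (Set.mem_insert p _)] at h
  let f : σ → ((fun x => x -ᵥ p) '' ((insert p (σ : Set (Euc n)) : Set (Euc n)) \ {p}) : Set (Euc n)) :=
    fun y => ⟨(y : Euc n) - p, ⟨y, ⟨by simp, by rintro rfl; exact hp y.2⟩, rfl⟩⟩
  have hf : Function.Injective f := by
    intro y z hyz
    have : (y : Euc n) - p = z - p := congrArg Subtype.val hyz
    exact Subtype.ext (by simpa using this)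
  have h2 := h.comp f hf
  rw [Fintype.linearIndependent_iff] at h2
  have h3 := h2 (fun y => x y) (by
    rw [edgeMap, Module.Basis.constr_apply_fintype] at hx
    simpa [f] using hx)
  ext y
  exact h3 y

lemma meas_pos {n : ℕ} (σ : Finset (Euc n)) (p : Euc n) (hp : p ∉ σ) 
    (h : AffineIndependent ℝ (fun x : (insert p (σ : Set (Euc n)) : Set (Euc n)) => (x : Euc n))) :
    0 < (μH[(σ.card : ℝ)] (convexHull ℝ (insert p (σ : Set (Euc n))))).toReal := by
  rw [meas_simplex, ENNReal.toReal_mul, ENNReal.toReal_ofReal (LinearMap.normDet_nonneg _)]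
  exact mul_pos (edgeMap_pos σ p hp h) (ENNReal.toReal_pos (cS_ne σ).1 (cS_ne σ).2)

lemma mem_vs {n : ℕ} (σ : Finset (Euc n)) (p q ν : Euc n)
    (h : ν ∈ vectorSpan ℝ (insert p (insert q (σ : Set (Euc n))))) :
    ∃ (a : σ → ℝ) (b : ℝ), ν = ∑ i, a i • ((i : Euc n) - p) + b • (q - p) := by
  rw [vectorSpan_eq_span_vsub_set_right ℝ (Set.mem_insert p _)] at h
  rw [Set.image_insert_eq, Set.image_insert_eq] at h
  simp only [vsub_eq_sub, sub_self, Submodule.span_insert_zero] at h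
  rw [Submodule.mem_span_insert] at h
  obtain ⟨b, z, hz, rfl⟩ := h
  have : ((fun x => x - p) '' (σ : Set (Euc n))) = Set.range (fun y : σ => (y : Euc n) - p) := by
    ext x; simp
  rw [this, Submodule.mem_span_range_iff_exists_fun] at hz
  obtain ⟨a, rfl⟩ := hz
  exact ⟨a, b, add_comm _ _⟩

lemma isConormal_conormal {n K : ℕ} (b : Fin (K + 2) → Euc n) (hb : AffineIndependent ℝ b)
    (i : Fin (K + 2)) : IsConormal b i (conormal b i) := by
  have hex : ∃ v, IsConormal b i v := by
    set D := vectorSpan ℝ (Set.range (face b i)) with hD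
    set u := b i - bary (face b i) with hu
    obtain ⟨j, hj⟩ : ∃ j, j ≠ i := exists_ne i
    have hbj : bary (face b i) - b j ∈ D := by
      have hc : (Fintype.card {j // j ≠ i} : ℝ) ≠ 0 := by
        have : Nonempty {j // j ≠ i} := ⟨⟨j, hj⟩⟩
        exact_mod_cast Fintype.card_ne_zero
      have : bary (face b i) - b j
          = (Fintype.card {j // j ≠ i} : ℝ)⁻¹ • ∑ l, (face b i l - b j) := by
        rw [Finset.sum_sub_distrib, smul_sub, bary, Finset.sum_const, Finset.card_univ,
          ← Nat.cast_smul_eq_nsmul ℝ, smul_smul, inv_mul_cancel₀ hc, one_smul]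
      rw [this]
      refine D.smul_mem _ (D.sum_mem fun l _ => ?_)
      exact vsub_mem_vectorSpan ℝ ⟨l, rfl⟩ ⟨⟨j, hj⟩, rfl⟩
    have huD : u ∉ D := by
      intro h
      have h1 : b i - b j ∈ D := by
        have := D.add_mem h hbj
        simpa [hu] using this
      have h2 : b i ∈ affineSpan ℝ (b '' {i}ᶜ) := by
        have hr : b '' {i}ᶜ = Set.range (face b i) := by
          ext x; simp [face]
        rw [hr]
        have := AffineSubspace.vadd_mem_of_mem_direction (s := affineSpan ℝ (Set.range (face b i)))
          (by rw [direction_affineSpan]; exact h1) (p := b j) (subset_affineSpan ℝ _ ⟨⟨j, hj⟩, rfl⟩)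
        simpa using this
      rw [hb.mem_affineSpan_iff] at h2
      exact h2 rfl
    set v := u - D.starProjection u with hv
    have hvD : v ∈ Dᗮ := Submodule.sub_starProjection_mem_orthogonal u
    have hv0 : v ≠ 0 := by
      intro h
      rw [hv, sub_eq_zero] at h
      exact huD (h ▸ Submodule.starProjection_apply_mem D u)
    have hvu : ⟪v, u⟫ = ‖v‖ ^ 2 := by
      have h1 : ⟪v, D.starProjection u⟫ = 0 :=
        Submodule.inner_left_of_mem_orthogonal (Submodule.starProjection_apply_mem D u) hvD
      have h2 : u = v + D.starProjection u := by rw [hv]; abel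
      conv_lhs => rw [h2]
      rw [inner_add_right, h1, add_zero, real_inner_self_eq_norm_sq]
    have hnv : 0 < ‖v‖ := norm_pos_iff.mpr hv0
    have hDle : D ≤ vectorSpan ℝ (Set.range b) := by
      apply vectorSpan_mono
      rintro _ ⟨l, rfl⟩
      exact ⟨l, rfl⟩
    have huV : u ∈ vectorSpan ℝ (Set.range b) := by
      have h1 : b i - b j ∈ vectorSpan ℝ (Set.range b) := vsub_mem_vectorSpan ℝ ⟨i, rfl⟩ ⟨j, rfl⟩
      have := Submodule.sub_mem _ h1 (hDle hbj)
      simpa [hu] using this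
    refine ⟨(-‖v‖⁻¹) • v, ?_, ?_, ?_, ?_⟩
    · exact Submodule.smul_mem _ _ (Submodule.sub_mem _ huV
        (hDle (Submodule.starProjection_apply_mem D u)))
    · rw [norm_smul]; simp [hnv.ne']
    · intro w hw
      rw [inner_smul_left, Submodule.inner_left_of_mem_orthogonal hw hvD]; simp
    · rw [inner_smul_left, hvu]
      simp
      positivity
  rw [conormal, dif_pos hex]
  exact hex.choose_spec

lemma conormal_facts {n K : ℕ} (b : Fin (K + 2) → Euc n) (hb : AffineIndependent ℝ b)
    (i : Fin (K + 2)) : conormal b i ∈ vectorSpan ℝ (Set.range b) ∧ ‖conormal b i‖ = 1 ∧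
      (∀ j l, j ≠ i → l ≠ i → ⟪conormal b i, b j - b l⟫ = 0) ∧
      (∀ j, j ≠ i → ⟪conormal b i, b i - b j⟫ < 0) := by
  obtain ⟨h1, h2, h3, h4⟩ := isConormal_conormal b hb i
  have h5 : ∀ j l, j ≠ i → l ≠ i → ⟪conormal b i, b j - b l⟫ = 0 := fun j l hj hl =>
    h3 _ (vsub_mem_vectorSpan ℝ ⟨⟨j, hj⟩, rfl⟩ ⟨⟨l, hl⟩, rfl⟩)
  refine ⟨h1, h2, h5, fun j hj => ?_⟩
  have hc : (Fintype.card {j // j ≠ i} : ℝ) ≠ 0 := by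
    have : Nonempty {j // j ≠ i} := ⟨⟨j, hj⟩⟩
    exact_mod_cast Fintype.card_ne_zero
  have h6 : bary (face b i) - b j
      = (Fintype.card {j // j ≠ i} : ℝ)⁻¹ • ∑ l, (face b i l - b j) := by
    rw [Finset.sum_sub_distrib, smul_sub, bary, Finset.sum_const, Finset.card_univ,
      ← Nat.cast_smul_eq_nsmul ℝ, smul_smul, inv_mul_cancel₀ hc, one_smul]
  have h7 : ⟪conormal b i, bary (face b i) - b j⟫ = 0 := by
    rw [h6, inner_smul_right, inner_sum, Finset.sum_eq_zero, mul_zero]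
    intro l _
    exact h5 _ _ l.2 hj
  have h8 : b i - b j = (b i - bary (face b i)) + (bary (face b i) - b j) := by abel
  rw [h8, inner_add_right, h7, add_zero]
  exact h4

/-- the submodule of beam sums -/
def beamSub (n k' : ℕ) : Submodule ℝ (Set (Euc n) → Euc n) where
  carrier := {G | IsBeamSum (k' + 2) G}
  zero_mem' := ⟨0, Fin.elim0, Fin.elim0, fun j => j.elim0, fun j => j.elim0, fun j => j.elim0, by
    ext S; simp⟩
  add_mem' := by
    rintro _ _ ⟨m₁, τ₁, A₁, h1, h2, h3, rfl⟩ ⟨m₂, τ₂, A₂, g1, g2, g3, rfl⟩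
    refine ⟨m₁ + m₂, Fin.append τ₁ τ₂, Fin.append A₁ A₂, ?_, ?_, ?_, ?_⟩
    · intro j; refine Fin.addCases (fun j => ?_) (fun j => ?_) j
      · simpa using h1 j
      · simpa using g1 j
    · intro j; refine Fin.addCases (fun j => ?_) (fun j => ?_) j
      · simpa using h2 j
      · simpa using g2 j
    · intro j; refine Fin.addCases (fun j => ?_) (fun j => ?_) j
      · simpa using h3 j
      · simpa using g3 j
    · funext S
      simp [Fin.sum_univ_add]
  smul_mem' := by
    rintro c _ ⟨m, τ, A, h1, h2, h3, rfl⟩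
    refine ⟨m, τ, fun j => c • A j, h1, ?_, ?_, ?_⟩
    · intro j; exact (h2 j).smul c
    · intro j v
      have : matVec (c • A j) v = c • matVec (A j) v := by simp [matVec]
      rw [this]
      exact Submodule.smul_mem _ _ (h3 j v)
    · funext S
      simp only [Pi.smul_apply, Finset.smul_sum, beam]
      refine Finset.sum_congr rfl fun j _ => Finset.sum_congr rfl fun i _ => ?_
      have : ∀ v, matVec (c • A j) v = c • matVec (A j) v := fun v => by simp [matVec]
      rw [this, smul_comm]

/-- normalized force on a simplex -/
def nforce {n : ℕ} (k' : ℕ) (t : Finset (Euc n)) : Euc n →ₗ[ℝ] (Set (Euc n) → Euc n) where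
  toFun v := fun S => ((μH[(k' : ℝ)] (convexHull ℝ (t : Set (Euc n)))).toReal⁻¹ *
    (μH[(k' : ℝ)] (S ∩ convexHull ℝ (t : Set (Euc n)))).toReal) • v
  map_add' v w := by funext S; simp
  map_smul' c v := by funext S; simp [smul_comm c]

lemma matVec_rankOne {n : ℕ} (w ν : Euc n) : matVec (rankOne w) ν = ⟪ν, w⟫ • w := by
  ext i
  simp [matVec, rankOne, Matrix.toLpLin_apply, Matrix.mulVec, dotProduct, PiLp.inner_apply,
    Finset.sum_mul]
  refine Finset.sum_congr rfl fun j _ => ?_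
  ring

open scoped Classical in
lemma beam_move {n k' : ℕ} (σ : Finset (Euc n)) (p q : Euc n) (hσ : σ.card = k')
    (hp : p ∉ σ) (hq : q ∉ σ) (hpq : p ≠ q) (h : AI (insert p (insert q σ))) :
    nforce k' (insert p σ) (q - p) - nforce k' (insert q σ) (q - p) ∈ beamSub n k' := by
  set T := insert p (insert q σ) with hT
  have hcard : T.card = k' + 2 := by
    rw [hT, Finset.card_insert_of_notMem (by simp [hpq, hp]), Finset.card_insert_of_notMem hq, hσ]
  let e : Fin (k' + 2) ≃ T := (T.equivFinOfCardEq hcard).symm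
  let b : Fin (k' + 2) → Euc n := fun i => (e i : Euc n)
  have hb : AffineIndependent ℝ b := h.comp_embedding e.toEmbedding
  have hpT : p ∈ T := by simp [hT]
  have hqT : q ∈ T := by simp [hT]
  set ip := e.symm ⟨p, hpT⟩ with hip
  set iq := e.symm ⟨q, hqT⟩ with hiq
  have hbp : b ip = p := by simp [b, hip]
  have hbq : b iq = q := by simp [b, hiq]
  have hne : ip ≠ iq := by intro h; rw [← hbp, ← hbq, h] at hpq; exact hpq rfl
  have hrange : Set.range b = insert p (insert q (σ : Set (Euc n))) := by
    ext x
    constructor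
    · rintro ⟨i, rfl⟩
      have : (e i : Euc n) ∈ insert p (insert q σ) := (e i).2
      rw [Finset.mem_insert, Finset.mem_insert] at this
      exact this
    · intro hx
      have : x ∈ T := by simpa [hT] using hx
      exact ⟨e.symm ⟨x, this⟩, by simp [b]⟩
  have hface : ∀ i, Set.range (face b i) = Set.range b \ {b i} := by
    intro i; ext x
    constructor
    · rintro ⟨j, rfl⟩
      exact ⟨⟨j, rfl⟩, fun h => j.2 (hb.injective h)⟩
    · rintro ⟨⟨j, rfl⟩, hj⟩
      exact ⟨⟨j, fun h => hj (by simp [h])⟩, rfl⟩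
  have hfp : simplexSet (face b ip) = convexHull ℝ (insert q (σ : Set (Euc n))) := by
    rw [simplexSet, hface, hrange, hbp]
    congr 1
    ext x; simp only [Set.mem_sdiff, Set.mem_insert_iff, Set.mem_singleton_iff, Finset.mem_coe]
    constructor
    · tauto
    · rintro (rfl | hx)
      · tauto
      · exact ⟨by tauto, by rintro rfl; exact hp hx⟩
  have hfq : simplexSet (face b iq) = convexHull ℝ (insert p (σ : Set (Euc n))) := by
    rw [simplexSet, hface, hrange, hbq]
    congr 1
    ext x; simp only [Set.mem_sdiff, Set.mem_insert_iff, Set.mem_singleton_iff, Finset.mem_coe]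
    constructor
    · tauto
    · rintro (rfl | hx)
      · tauto
      · exact ⟨by tauto, by rintro rfl; exact hq hx⟩
  obtain ⟨P1, P2, P3, P4⟩ := conormal_facts b hb ip
  obtain ⟨Q1, Q2, Q3, Q4⟩ := conormal_facts b hb iq
  set νp := conormal b ip with hνp
  set νq := conormal b iq with hνq
  have hy : ∀ y : σ, ∃ i, b i = y ∧ i ≠ ip ∧ i ≠ iq := by
    intro y
    have : (y : Euc n) ∈ Set.range b := by rw [hrange]; simp
    obtain ⟨i, hi⟩ := this
    refine ⟨i, hi, ?_, ?_⟩
    · rintro rfl; rw [hbp] at hi; exact hp (hi ▸ y.2)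
    · rintro rfl; rw [hbq] at hi; exact hq (hi ▸ y.2)
  set w := q - p with hw
  have hpw : 0 < ⟪νp, w⟫ := by
    have := P4 iq hne.symm
    rw [hbp, hbq, ← neg_sub, inner_neg_right] at this
    linarith
  have hqw : ⟪νq, w⟫ < 0 := by
    have := Q4 ip hne
    rwa [hbp, hbq] at this
  rw [hrange] at P1 Q1
  have g1 := gram_normal (fun y : σ => (y : Euc n) - p) w νq Q2 (by
    intro y
    obtain ⟨i, hi, h1, h2⟩ := hy y
    rw [← hi, ← hbp]; exact Q3 _ _ h2 hne) (mem_vs σ p q νq Q1)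
  have g2 := gram_normal (fun y : σ => (y : Euc n) - q) w νp P2 (by
    intro y
    obtain ⟨i, hi, h1, h2⟩ := hy y
    rw [← hi, ← hbq]; exact P3 _ _ h1 hne.symm) (by
      rw [Set.insert_comm] at P1
      obtain ⟨a, c, hac⟩ := mem_vs σ q p νp P1
      refine ⟨a, -c, ?_⟩
      rw [hac, hw, neg_smul, ← smul_neg, neg_sub])
  have g3 := gram_shift (fun y : σ => (y : Euc n) - p) w
  have g4 : (fun y : σ => (y : Euc n) - p - w) = (fun y : σ => (y : Euc n) - q) := by
    funext y; rw [hw]; abel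
  rw [g4, g1, g2, ← normDet_sq_gram, ← normDet_sq_gram] at g3
  have g5 : ⟪νp, w⟫ * (edgeMap σ q).normDet = (-⟪νq, w⟫) * (edgeMap σ p).normDet := by
    refine (pow_left_inj₀ ?_ ?_ two_ne_zero).mp (by rw [mul_pow, mul_pow, neg_sq]; exact g3)
    · exact mul_nonneg hpw.le (LinearMap.normDet_nonneg _)
    · exact mul_nonneg (by linarith) (LinearMap.normDet_nonneg _)
  have hAIp : AffineIndependent ℝ
      (fun x : (insert p (σ : Set (Euc n)) : Set (Euc n)) => (x : Euc n)) := by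
    refine hb.range.mono ?_
    rw [hrange]; intro x; simp; tauto
  have hAIq : AffineIndependent ℝ
      (fun x : (insert q (σ : Set (Euc n)) : Set (Euc n)) => (x : Euc n)) := by
    refine hb.range.mono ?_
    rw [hrange]; intro x; simp; tauto
  have m1 := meas_pos σ p hp hAIp
  have m2 := meas_pos σ q hq hAIq
  have m3 : ⟪νp, w⟫ * (μH[(σ.card : ℝ)] (convexHull ℝ (insert q (σ : Set (Euc n))))).toReal =
      (-⟪νq, w⟫) * (μH[(σ.card : ℝ)] (convexHull ℝ (insert p (σ : Set (Euc n))))).toReal := by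
    rw [meas_simplex, meas_simplex, ENNReal.toReal_mul, ENNReal.toReal_mul,
      ENNReal.toReal_ofReal (LinearMap.normDet_nonneg _),
      ENNReal.toReal_ofReal (LinearMap.normDet_nonneg _), ← mul_assoc, ← mul_assoc, g5]
  rw [hσ] at m1 m2 m3
  have hbeam : beam (rankOne w) b ∈ beamSub n k' := by
    refine ⟨1, fun _ => b, fun _ => rankOne w, fun _ => hb, fun _ => ?_, fun _ v => ?_, ?_⟩
    · ext i j; simp [rankOne, mul_comm]
    · rw [matVec_rankOne]
      refine Submodule.smul_mem _ _ ?_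
      rw [hw, ← hbp, ← hbq]
      exact vsub_mem_vectorSpan ℝ ⟨iq, rfl⟩ ⟨ip, rfl⟩
    · funext S; simp
  have key : nforce k' (insert p σ) w - nforce k' (insert q σ) w =
      (-(⟪νp, w⟫ * (μH[(k' : ℝ)] (convexHull ℝ (insert q (σ : Set (Euc n))))).toReal)⁻¹) •
        beam (rankOne w) b := by
    funext S
    have hbS : beam (rankOne w) b S =
        ((μH[(k' : ℝ)] (S ∩ convexHull ℝ (insert q (σ : Set (Euc n))))).toReal * ⟪νp, w⟫ +
        (μH[(k' : ℝ)] (S ∩ convexHull ℝ (insert p (σ : Set (Euc n))))).toReal * ⟪νq, w⟫) • w := by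
      have hk : ((k' + 2 : ℕ) : ℝ) - 2 = k' := by push_cast; ring
      simp only [beam, hk, matVec_rankOne]
      rw [Fintype.sum_eq_add ip iq hne, hfp, hfq, smul_smul, smul_smul, ← add_smul]
      rintro i ⟨hi1, hi2⟩
      obtain ⟨-, -, R3, -⟩ := conormal_facts b hb i
      have := R3 iq ip hi2.symm hi1.symm
      rw [hbp, hbq] at this
      rw [this]; simp
    simp only [Pi.sub_apply, Pi.smul_apply, hbS, nforce, LinearMap.coe_mk, AddHom.coe_mk,
      Finset.coe_insert, ← sub_smul, smul_smul]
    congr 1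
    set Hp := (μH[(k' : ℝ)] (convexHull ℝ (insert p (σ : Set (Euc n))))).toReal
    set Hq := (μH[(k' : ℝ)] (convexHull ℝ (insert q (σ : Set (Euc n))))).toReal
    have hz : ⟪νq, w⟫ = - (⟪νp, w⟫ * Hq / Hp) := by
      rw [m3]; field_simp
    rw [hz]
    field_simp
    ring
  rw [key]
  exact Submodule.smul_mem _ _ hbeam

lemma exists_generic {n : ℕ} {ι : Type*} [Countable ι] (A : ι → AffineSubspace ℝ (Euc n))
    (h : ∀ i, A i ≠ ⊤) : ∃ y, ∀ i, y ∉ A i := by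
  by_contra! hc
  have h1 : (volume : Measure (Euc n)) (⋃ i, (A i : Set (Euc n))) = 0 := by
    rw [measure_iUnion_null_iff]
    exact fun i => Measure.addHaar_affineSubspace _ _ (h i)
  have h2 : (⋃ i, (A i : Set (Euc n))) = Set.univ := by
    ext x; simpa using hc x
  rw [h2] at h1
  exact (NeZero.ne (volume : Measure (Euc n))) (Measure.measure_univ_eq_zero.mp h1)

lemma span_ne_top {n : ℕ} (t : Finset (Euc n)) (h : t.card ≤ n) :
    affineSpan ℝ (t : Set (Euc n)) ≠ ⊤ := by
  intro ht
  rcases t.eq_empty_or_nonempty with rfl | hne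
  · simp at ht
  · have : Nonempty t := hne.to_subtype
    have h1 := finrank_vectorSpan_range_add_one_le ℝ (fun x : t => (x : Euc n))
    have h2 : Set.range (fun x : t => (x : Euc n)) = (t : Set (Euc n)) := by
      ext x; simp
    rw [h2, ← direction_affineSpan, ht, AffineSubspace.direction_top, finrank_top] at h1
    simp at h1
    omega

lemma AI.mono {n : ℕ} {s t : Finset (Euc n)} (h : AI t) (hst : s ⊆ t) : AI s :=
  AffineIndependent.mono (s := (s : Set (Euc n))) (t := (t : Set (Euc n))) h
    (Finset.coe_subset.mpr hst)

open scoped Classical in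
lemma AI.ins {n : ℕ} {t : Finset (Euc n)} (h : AI t) {q : Euc n}
    (hq : q ∉ affineSpan ℝ (t : Set (Euc n))) : AI (insert q t) := by
  have hqt : q ∉ t := fun hc => hq (subset_affineSpan ℝ _ hc)
  have h' : AffineIndependent ℝ (fun x : t => (x : Euc n)) := h
  let i₀ : (insert q t : Finset (Euc n)) := ⟨q, Finset.mem_insert_self q t⟩
  have hmem : ∀ y : (insert q t : Finset (Euc n)), y ≠ i₀ → (y : Euc n) ∈ t := by
    intro y hy
    rcases Finset.mem_insert.mp y.2 with h | h
    · exact absurd (Subtype.ext h) hy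
    · exact h
  have hspan : (i₀ : Euc n) ∉ affineSpan ℝ
      ((fun x : (insert q t : Finset (Euc n)) => (x : Euc n)) '' {x | x ≠ i₀}) := by
    intro hc
    refine hq (affineSpan_mono ℝ ?_ hc)
    rintro _ ⟨y, hy, rfl⟩
    exact hmem y hy
  let f : {y : (insert q t : Finset (Euc n)) // y ≠ i₀} → t := fun y => ⟨y.1.1, hmem y.1 y.2⟩
  have hf : Function.Injective f := by
    intro y z hyz
    have := congrArg Subtype.val hyz
    exact Subtype.ext (Subtype.ext this)
  have h2 : AffineIndependent ℝ (fun x : {y : (insert q t : Finset (Euc n)) // y ≠ i₀} =>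
      (fun x : (insert q t : Finset (Euc n)) => (x : Euc n)) x) :=
    h'.comp_embedding ⟨f, hf⟩
  exact h2.affineIndependent_of_notMem_span hspan

lemma notMem_of_span {n : ℕ} {t : Finset (Euc n)} {q : Euc n}
    (hq : q ∉ affineSpan ℝ (t : Set (Euc n))) : q ∉ t :=
  fun hc => hq (subset_affineSpan ℝ _ hc)

open scoped Classical in
def Moves {n : ℕ} {Q : Type*} [AddCommGroup Q] [Module ℝ Q] (k' : ℕ)
    (g : Finset (Euc n) → Euc n →ₗ[ℝ] Q) : Prop :=
  ∀ (σ : Finset (Euc n)) (p q : Euc n), σ.card = k' → p ∉ σ → q ∉ σ → p ≠ q →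
    AI (insert p (insert q σ)) → g (insert p σ) (q - p) = g (insert q σ) (q - p)

def Msub {n : ℕ} {Q : Type*} [AddCommGroup Q] [Module ℝ Q] (k' : ℕ)
    (g : Finset (Euc n) → Euc n →ₗ[ℝ] Q) (Y : Finset (Euc n)) : Submodule ℝ Q :=
  Submodule.span ℝ {z | ∃ t v, AI t ∧ t.card = k' + 1 ∧ Y ⊆ t ∧ z = g t v}

open scoped Classical in
lemma cyc {n : ℕ} {Q : Type*} [AddCommGroup Q] [Module ℝ Q] {k' : ℕ}
    {g : Finset (Euc n) → Euc n →ₗ[ℝ] Q} (hg : Moves k' g) (Y τ : Finset (Euc n)) (hY : Y ⊆ τ)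
    (hτ : τ.card + 1 = k') (a b c y : Euc n) (ha : a ∉ τ) (hb : b ∉ τ) (hc : c ∉ τ) (hy : y ∉ τ)
    (hab : a ≠ b) (hac : a ≠ c) (hay : a ≠ y) (hbc : b ≠ c) (hby : b ≠ y) (hcy : c ≠ y)
    (h : AI (insert a (insert b (insert c (insert y τ))))) :
    g (insert a (insert b τ)) (c - a) + g (insert b (insert c τ)) (a - b)
      ∈ Msub k' g (insert y Y) := by
  have e1 : g (insert a (insert b τ)) (c - a) = g (insert c (insert b τ)) (c - a) := by
    refine hg (insert b τ) a c (by rw [Finset.card_insert_of_notMem hb, hτ]) (by simp [hab, ha])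
      (by simp [hbc.symm, hc]) hac (h.mono ?_)
    intro x; simp; tauto
  have e2 : g (insert c (insert b τ)) (y - c) = g (insert y (insert b τ)) (y - c) := by
    refine hg (insert b τ) c y (by rw [Finset.card_insert_of_notMem hb, hτ]) (by simp [hbc.symm, hc])
      (by simp [hby.symm, hy]) hcy (h.mono ?_)
    intro x; simp; tauto
  have e3 : g (insert b (insert c τ)) (y - b) = g (insert y (insert c τ)) (y - b) := by
    refine hg (insert c τ) b y (by rw [Finset.card_insert_of_notMem hc, hτ]) (by simp [hbc, hb])
      (by simp [hcy.symm, hy]) hby (h.mono ?_)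
    intro x; simp; tauto
  have m2 : g (insert y (insert b τ)) (y - c) ∈ Msub k' g (insert y Y) := by
    refine Submodule.subset_span ⟨_, _, h.mono ?_, ?_, ?_, rfl⟩
    · intro x; simp; tauto
    · rw [Finset.card_insert_of_notMem (by simp [hby.symm, hy]), Finset.card_insert_of_notMem hb, hτ]
    · exact Finset.insert_subset_insert _ (hY.trans (Finset.subset_insert _ _))
  have m3 : g (insert y (insert c τ)) (y - b) ∈ Msub k' g (insert y Y) := by
    refine Submodule.subset_span ⟨_, _, h.mono ?_, ?_, ?_, rfl⟩
    · intro x; simp; tauto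
    · rw [Finset.card_insert_of_notMem (by simp [hcy.symm, hy]), Finset.card_insert_of_notMem hc, hτ]
    · exact Finset.insert_subset_insert _ (hY.trans (Finset.subset_insert _ _))
  have hcomm : insert c (insert b τ) = insert b (insert c τ) := Finset.insert_comm _ _ _
  have : g (insert a (insert b τ)) (c - a) + g (insert b (insert c τ)) (a - b)
      = g (insert y (insert c τ)) (y - b) - g (insert y (insert b τ)) (y - c) := by
    rw [e1, ← e2, ← e3, hcomm, ← map_add, ← map_sub]
    congr 1; abel
  rw [this]
  exact Submodule.sub_mem _ m3 m2

open scoped Classical in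
lemma stepY {n : ℕ} {Q : Type*} [AddCommGroup Q] [Module ℝ Q] {k' : ℕ} (hn : k' + 3 ≤ n)
    {g : Finset (Euc n) → Euc n →ₗ[ℝ] Q} (hg : Moves k' g) (Y t : Finset (Euc n)) (hYt : Y ⊆ t)
    (ht : AI t) (htc : t.card = k' + 1) (hY : Y.card < k') (y : Euc n)
    (hy : y ∉ affineSpan ℝ (t : Set (Euc n))) (v : Euc n) :
    g t v ∈ Msub k' g (insert y Y) := by
  have hcard : 1 < (t \ Y).card := by
    rw [Finset.card_sdiff_of_subset hYt]; omega
  obtain ⟨a, ha, b, hb, hab⟩ := Finset.one_lt_card.mp hcard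
  rw [Finset.mem_sdiff] at ha hb
  set τ := (t.erase a).erase b with hτ
  have haτ : a ∉ τ := by simp [hτ]
  have hbτ : b ∉ τ := by simp [hτ]
  have htτ : insert a (insert b τ) = t := by
    rw [hτ, Finset.insert_erase (by simp [hb.1, hab.symm]), Finset.insert_erase ha.1]
  have hYτ : Y ⊆ τ := by
    intro x hx
    simp only [hτ, Finset.mem_erase]
    exact ⟨by rintro rfl; exact hb.2 hx, by rintro rfl; exact ha.2 hx, hYt hx⟩
  have hτc : τ.card + 1 = k' := by
    rw [← htτ, Finset.card_insert_of_notMem (by simp [hab, haτ]),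
      Finset.card_insert_of_notMem hbτ] at htc
    omega
  have hyt := notMem_of_span hy
  have hτt : τ ⊆ t := by rw [← htτ]; intro x; simp; tauto
  have hAIy := ht.ins hy
  set D := (affineSpan ℝ ((insert y t : Finset (Euc n)) : Set (Euc n))).direction with hD
  have hDt : D ≠ ⊤ := by
    intro hc
    refine span_ne_top (insert y t) (by rw [Finset.card_insert_of_notMem hyt]; omega) ?_
    refine (AffineSubspace.direction_eq_top_iff_of_nonempty ?_).mp hc
    exact ⟨y, subset_affineSpan ℝ _ (by simp)⟩
  have main : ∀ u, u ∉ D → g t u ∈ Msub k' g (insert y Y) := by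
    intro u hu
    set c := u + a with hc
    have hcs : c ∉ affineSpan ℝ ((insert y t : Finset (Euc n)) : Set (Euc n)) := by
      intro h
      apply hu
      have := AffineSubspace.vsub_mem_direction h
        (subset_affineSpan ℝ ((insert y t : Finset (Euc n)) : Set (Euc n)) (by
          simp [ha.1] : a ∈ ((insert y t : Finset (Euc n)) : Set (Euc n))))
      have e : c -ᵥ a = u := by simp [hc]
      rw [e] at this
      exact this
    have hct := notMem_of_span hcs
    rw [Finset.mem_insert, not_or] at hct
    have hall := hAIy.ins hcs
    have ca : a ≠ c := by rintro h; rw [← h] at hct; exact hct.2 ha.1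
    have cb : b ≠ c := by rintro h; rw [← h] at hct; exact hct.2 hb.1
    have ya : a ≠ y := by rintro h; rw [← h] at hyt; exact hyt ha.1
    have yb : b ≠ y := by rintro h; rw [← h] at hyt; exact hyt hb.1
    have hcτ : c ∉ τ := fun h => hct.2 (hτt h)
    have hyτ : y ∉ τ := fun h => hyt (hτt h)
    have x1 := cyc hg Y τ hYτ hτc a b c y haτ hbτ hcτ hyτ hab ca ya cb yb hct.1 (hall.mono (by
      rw [← htτ]; intro x; simp; tauto))
    have x2 := cyc hg Y τ hYτ hτc b c a y hbτ hcτ haτ hyτ cb hab.symm yb ca.symm hct.1 ya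
      (hall.mono (by rw [← htτ]; intro x; simp; tauto))
    have x3 := cyc hg Y τ hYτ hτc c a b y hcτ haτ hbτ hyτ ca.symm cb.symm hct.1 hab ya yb
      (hall.mono (by rw [← htτ]; intro x; simp; tauto))
    have : g t u = (2⁻¹ : ℝ) • ((g (insert a (insert b τ)) (c - a) + g (insert b (insert c τ)) (a - b))
        - (g (insert b (insert c τ)) (a - b) + g (insert c (insert a τ)) (b - c))
        + (g (insert c (insert a τ)) (b - c) + g (insert a (insert b τ)) (c - a))) := by
      have hu : c - a = u := by simp [hc]
      rw [htτ, hu]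
      module
    rw [this]
    exact Submodule.smul_mem _ _ (Submodule.add_mem _ (Submodule.sub_mem _ x1 x2) x3)
  by_cases hv : v ∈ D
  · obtain ⟨u, -, hu⟩ := SetLike.exists_of_lt hDt.lt_top
    have h1 : v + u ∉ D := fun h => hu (by simpa using D.sub_mem h hv)
    have : g t v = g t (v + u) - g t u := by rw [← map_sub]; simp
    rw [this]
    exact Submodule.sub_mem _ (main _ h1) (main _ hu)
  · exact main v hv

open scoped Classical in
lemma nextY {n : ℕ} {Q : Type*} [AddCommGroup Q] [Module ℝ Q] {k' : ℕ} (hn : k' + 3 ≤ n)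
    {g : Finset (Euc n) → Euc n →ₗ[ℝ] Q} (hg : Moves k' g) (Y : Finset (Euc n))
    (hY : Y.card < k') (z : Q) (hz : z ∈ Msub k' g Y) :
    ∃ Y' : Finset (Euc n), Y'.card = Y.card + 1 ∧ z ∈ Msub k' g Y' := by
  rw [Msub, Submodule.mem_span_set'] at hz
  obtain ⟨m, f, G, rfl⟩ := hz
  choose t v h1 h2 h3 h4 using fun i => (G i).2
  obtain ⟨y, hy⟩ := exists_generic
    (fun i : Option (Fin m) => i.elim (affineSpan ℝ (Y : Set (Euc n)))
      (fun i => affineSpan ℝ (t i : Set (Euc n)))) (by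
      rintro (_ | i)
      · exact span_ne_top _ (by omega)
      · exact span_ne_top _ (by rw [h2]; omega))
  refine ⟨insert y Y, Finset.card_insert_of_notMem (notMem_of_span (hy none)), ?_⟩
  refine Submodule.sum_mem _ fun i _ => Submodule.smul_mem _ _ ?_
  rw [h4 i]
  exact stepY hn hg Y (t i) (h3 i) (h1 i) (h2 i) hY y (hy (some i)) (v i)

lemma exists_Y {n : ℕ} {Q : Type*} [AddCommGroup Q] [Module ℝ Q] {k' : ℕ} (hn : k' + 3 ≤ n)
    {g : Finset (Euc n) → Euc n →ₗ[ℝ] Q} (hg : Moves k' g) (z : Q) (hz : z ∈ Msub k' g ∅) :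
    ∃ Y : Finset (Euc n), Y.card = k' ∧ z ∈ Msub k' g Y := by
  have : ∀ j, j ≤ k' → ∃ Y : Finset (Euc n), Y.card = j ∧ z ∈ Msub k' g Y := by
    intro j
    induction j with
    | zero => intro _; exact ⟨∅, rfl, hz⟩
    | succ j ih =>
      intro hj
      obtain ⟨Y, hY, hzY⟩ := ih (by omega)
      obtain ⟨Y', h1, h2⟩ := nextY hn hg Y (by omega) z hzY
      exact ⟨Y', by omega, h2⟩
  exact this k' le_rfl

open scoped Classical in
lemma generic_pts {n k' r : ℕ} (hn : k' + 3 ≤ n) (σ : Finset (Euc n)) (hσ : σ.card = k')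
    (hσA : AI σ) (p : Fin r → Euc n) (m : ℕ) (hm : m ≤ n + 1) :
    ∃ X : Finset (Euc n), X.card = m ∧ AI X ∧
      (∀ x ∈ X, ∀ j, x ∉ affineSpan ℝ ((insert (p j) σ : Finset (Euc n)) : Set (Euc n))) ∧
      (∀ x ∈ X, x ∉ affineSpan ℝ (σ : Set (Euc n))) ∧
      (∀ x ∈ X, ∀ y ∈ X, x ≠ y → AI (insert x (insert y σ))) := by
  induction m with
  | zero =>
    refine ⟨∅, rfl, ?_, by simp, by simp, by simp⟩
    exact affineIndependent_of_subsingleton ℝ _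
  | succ m ih =>
    obtain ⟨X, h1, h2, h3, h4, h5⟩ := ih (by omega)
    obtain ⟨y, hy⟩ := exists_generic
      (fun i : (Fin r ⊕ X) ⊕ Bool => match i with
        | Sum.inl (Sum.inl j) => affineSpan ℝ ((insert (p j) σ : Finset (Euc n)) : Set (Euc n))
        | Sum.inl (Sum.inr x) => affineSpan ℝ ((insert (x : Euc n) σ : Finset (Euc n)) : Set (Euc n))
        | Sum.inr true => affineSpan ℝ (σ : Set (Euc n))
        | Sum.inr false => affineSpan ℝ (X : Set (Euc n))) (by
        rintro ((j | x) | (_ | _))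
        · exact span_ne_top _ (by have := Finset.card_insert_le (p j) σ; omega)
        · exact span_ne_top _ (by have := Finset.card_insert_le (x : Euc n) σ; omega)
        · exact span_ne_top _ (by omega)
        · exact span_ne_top _ (by omega))
    have y1 := fun j => hy (Sum.inl (Sum.inl j))
    have y2 := fun j => hy (Sum.inl (Sum.inr j))
    have y3 := hy (Sum.inr true)
    have y4 := hy (Sum.inr false)
    simp only at y1 y2 y3 y4
    have key : ∀ x ∈ X, AI (insert y (insert x σ)) := fun x hx =>
      (hσA.ins (h4 x hx)).ins (y2 ⟨x, hx⟩)
    refine ⟨insert y X, ?_, h2.ins y4, ?_, ?_, ?_⟩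
    · rw [Finset.card_insert_of_notMem (notMem_of_span y4), h1]
    · intro x hx
      rcases Finset.mem_insert.mp hx with rfl | hx
      · exact y1
      · exact h3 x hx
    · intro x hx
      rcases Finset.mem_insert.mp hx with rfl | hx
      · exact y3
      · exact h4 x hx
    · intro x hx z hz hxz
      rcases Finset.mem_insert.mp hx with rfl | hx' <;>
        rcases Finset.mem_insert.mp hz with rfl | hz'
      · exact absurd rfl hxz
      · exact key z hz'
      · rw [Finset.insert_comm]; exact key x hx'
      · exact h5 x hx' z hz' hxz

open scoped Classical in
lemma final_lem {n k' r : ℕ} (hn : k' + 3 ≤ n) {Q : Type*} [AddCommGroup Q] [Module ℝ Q]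
    {g : Finset (Euc n) → Euc n →ₗ[ℝ] Q} (hg : Moves k' g) (σ : Finset (Euc n))
    (hσ : σ.card = k') (p v : Fin r → Euc n) (hp : ∀ j, p j ∉ σ)
    (hA : ∀ j, AI (insert (p j) σ)) (hv : ∑ j, v j = 0)
    (hw : ∀ a b : Euc n →ₗ[ℝ] ℝ, ∑ j, (a (p j) * b (v j) - a (v j) * b (p j)) = 0) :
    ∑ j, g (insert (p j) σ) (v j) = 0 := by
  rcases Nat.eq_zero_or_pos r with rfl | hr
  · simp
  have hσA : AI σ := (hA ⟨0, hr⟩).mono (Finset.subset_insert _ _)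
  obtain ⟨X, h1, h2, h3, h4, h5⟩ := generic_pts hn σ hσ hσA p (n + 1) le_rfl
  have h2' : AffineIndependent ℝ (fun x : X => (x : Euc n)) := h2
  have htop : affineSpan ℝ (Set.range (fun x : X => (x : Euc n))) = ⊤ := by
    rw [h2'.affineSpan_eq_top_iff_card_eq_finrank_add_one]
    simp [h1]
  let bas : AffineBasis X ℝ (Euc n) := ⟨fun x => x, h2', htop⟩
  have hbas : ∀ x : X, bas x = (x : Euc n) := fun x => rfl
  let L : X → Euc n →ₗ[ℝ] ℝ := fun a => (bas.coord a).linear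
  have hcoord : ∀ (b : X) q, bas.coord b q = L b q + bas.coord b 0 := by
    intro b q
    have := (bas.coord b).map_vadd 0 q
    rwa [vadd_eq_add, vadd_eq_add, add_zero] at this
  have hL0 : ∀ u, ∑ a, L a u = 0 := by
    intro u
    have e : ∀ a, L a u = bas.coord a u - bas.coord a 0 := by
      intro a
      rw [hcoord a u]; ring
    simp only [e, Finset.sum_sub_distrib, bas.sum_coord_apply_eq_one, sub_self]
  have hcomb : ∀ q : Euc n, ∑ a, bas.coord a q • (a : Euc n) = q := fun q =>
    bas.linear_combination_coord_eq_self q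
  have hLv : ∀ u, ∑ a, L a u • (a : Euc n) = u := by
    intro u
    have e : ∀ a, L a u = bas.coord a u - bas.coord a 0 := by
      intro a
      rw [hcoord a u]; ring
    simp only [e, sub_smul, Finset.sum_sub_distrib, hcomb, sub_zero]
  have hv1 : ∀ j, v j = ∑ a : X, L a (v j) • ((a : Euc n) - p j) := by
    intro j
    simp only [smul_sub, Finset.sum_sub_distrib, hLv, ← Finset.sum_smul, hL0, zero_smul, sub_zero]
  have hx1 : ∀ (a : X) j, (a : Euc n) - p j = ∑ b : X, bas.coord b (p j) • ((a : Euc n) - b) := by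
    intro a j
    simp only [smul_sub, Finset.sum_sub_distrib, hcomb, ← Finset.sum_smul,
      bas.sum_coord_apply_eq_one, one_smul]
  let E : X → X → Q := fun a b => g (insert (a : Euc n) σ) ((a : Euc n) - b)
  have hE : ∀ a b, E a b = - E b a := by
    intro a b
    by_cases hab : a = b
    · subst hab; simp [E]
    · have hab' : (a : Euc n) ≠ b := fun h => hab (Subtype.ext h)
      have := hg σ b a hσ (notMem_of_span (h4 b b.2)) (notMem_of_span (h4 a a.2)) hab'.symm
        (h5 b b.2 a a.2 hab'.symm)
      simp only [E]
      rw [← this, ← map_neg, neg_sub]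
  have hm : ∀ (a : X) j, g (insert (p j) σ) ((a : Euc n) - p j)
      = ∑ b : X, bas.coord b (p j) • E a b := by
    intro a j
    have hne := notMem_of_span (h3 a a.2 j)
    rw [Finset.mem_insert, not_or] at hne
    have := hg σ (p j) a hσ (hp j) hne.2 (fun h => hne.1 h.symm) (by
      rw [Finset.insert_comm]; exact (hA j).ins (h3 a a.2 j))
    rw [this]
    conv_lhs => rw [hx1 a j]
    simp [E, map_sum]
  let C : X → X → ℝ := fun a b => ∑ j, L a (v j) * bas.coord b (p j)
  have hsum : ∑ j, g (insert (p j) σ) (v j) = ∑ a, ∑ b, C a b • E a b := by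
    have : ∀ j, g (insert (p j) σ) (v j)
        = ∑ a, ∑ b, (L a (v j) * bas.coord b (p j)) • E a b := by
      intro j
      conv_lhs => rw [hv1 j]
      simp only [map_sum, map_smul, hm, Finset.smul_sum, smul_smul]
    simp only [this, C, Finset.sum_smul]
    rw [Finset.sum_comm]
    refine Finset.sum_congr rfl fun a _ => ?_
    rw [Finset.sum_comm]
  have hC : ∀ a b, C a b = C b a := by
    intro a b
    have h := hw (L b) (L a)
    have e : ∀ a b, C a b = ∑ j, L a (v j) * L b (p j) := by
      intro a b
      have hz : ∑ j, L a (v j) = 0 := by rw [← map_sum, hv, map_zero]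
      calc C a b = ∑ j, (L a (v j) * L b (p j) + L a (v j) * bas.coord b 0) :=
            Finset.sum_congr rfl fun j _ => by rw [hcoord b (p j), mul_add]
        _ = _ := by rw [Finset.sum_add_distrib, ← Finset.sum_mul, hz, zero_mul, add_zero]
    rw [e, e, ← sub_eq_zero, ← h, ← Finset.sum_sub_distrib]
    exact Finset.sum_congr rfl fun j _ => by ring
  rw [hsum]
  have hneg : ∑ a, ∑ b, C a b • E a b = - ∑ a, ∑ b, C a b • E a b := by
    conv_lhs => rw [Finset.sum_comm]
    rw [← Finset.sum_neg_distrib]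
    refine Finset.sum_congr rfl fun a _ => ?_
    rw [← Finset.sum_neg_distrib]
    refine Finset.sum_congr rfl fun b _ => ?_
    rw [hC, hE b a, smul_neg]
  have : (2 : ℝ) • ∑ a, ∑ b, C a b • E a b = 0 := by
    rw [two_smul]
    nth_rw 1 [hneg]
    simp
  exact (smul_eq_zero.mp this).resolve_left (by norm_num)

/-- The torque functional. -/
def wf {n : ℕ} (x : Euc n) : Euc n →ₗ[ℝ] ((Euc n →ₗ[ℝ] ℝ) → (Euc n →ₗ[ℝ] ℝ) → ℝ) where
  toFun v := fun a b => a x * b v - a v * b x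
  map_add' u v := by
    funext a b; simp; ring
  map_smul' c v := by
    funext a b; simp; ring

open scoped Classical in
lemma combine {n k' l : ℕ} (hn : k' + 3 ≤ n) {Q : Type*} [AddCommGroup Q] [Module ℝ Q]
    {g : Finset (Euc n) → Euc n →ₗ[ℝ] Q} (hg : Moves k' g) (t : Fin l → Finset (Euc n))
    (v : Fin l → Euc n) (ht : ∀ i, AI (t i)) (hc : ∀ i, (t i).card = k' + 1)
    (hv : ∑ i, v i = 0) (hw : ∑ i, wf (∑ x ∈ t i, x) (v i) = 0) :
    ∑ i, g (t i) (v i) = 0 := by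
  let g' : Finset (Euc n) → Euc n →ₗ[ℝ]
      (Q × (Euc n × ((Euc n →ₗ[ℝ] ℝ) → (Euc n →ₗ[ℝ] ℝ) → ℝ))) :=
    fun t => (g t).prod (LinearMap.id.prod (wf (∑ x ∈ t, x)))
  have hg' : Moves k' g' := by
    intro σ p q h1 h2 h3 h4 h5
    refine Prod.ext (hg σ p q h1 h2 h3 h4 h5) (Prod.ext rfl ?_)
    funext a b
    change wf (∑ x ∈ insert p σ, x) (q - p) a b = wf (∑ x ∈ insert q σ, x) (q - p) a b
    simp only [Finset.sum_insert h2, Finset.sum_insert h3, wf, LinearMap.coe_mk, AddHom.coe_mk,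
      map_add, map_sub, Pi.sub_apply]
    ring
  have hz : ∑ i, g' (t i) (v i) ∈ Msub k' g' ∅ :=
    Submodule.sum_mem _ fun i _ => Submodule.subset_span ⟨t i, v i, ht i, hc i, by simp, rfl⟩
  obtain ⟨Y, hY, hzY⟩ := exists_Y hn hg' _ hz
  rw [Msub, Submodule.mem_span_set'] at hzY
  obtain ⟨m, f, G, hG⟩ := hzY
  choose t' v' a1 a2 a3 a4 using fun i => (G i).2
  have hp : ∀ j, ∃ p, p ∉ Y ∧ t' j = insert p Y := by
    intro j
    obtain ⟨p, hp⟩ : (t' j \ Y).Nonempty := by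
      rw [← Finset.card_pos, Finset.card_sdiff_of_subset (a3 j), a2, hY]; omega
    rw [Finset.mem_sdiff] at hp
    refine ⟨p, hp.2, (Finset.eq_of_subset_of_card_le
      (Finset.insert_subset hp.1 (a3 j)) ?_).symm⟩
    rw [a2, Finset.card_insert_of_notMem hp.2, hY]
  choose p hpY hpt using hp
  have hG' : ∑ j, g' (t' j) (f j • v' j) = ∑ i, g' (t i) (v i) := by
    rw [← hG]
    refine Finset.sum_congr rfl fun j _ => ?_
    rw [map_smul, a4 j]
  have c1 := congrArg Prod.fst hG'
  have c2 := congrArg (fun z => z.2.1) hG'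
  have c3 := congrArg (fun z => z.2.2) hG'
  simp only [Prod.fst_sum, Prod.snd_sum] at c1 c2 c3
  have d1 : ∑ j, g (t' j) (f j • v' j) = ∑ i, g (t i) (v i) := c1
  have d2 : ∑ j, f j • v' j = 0 := Eq.trans c2 hv
  have d3 : ∑ j, wf (∑ x ∈ t' j, x) (f j • v' j) = 0 := Eq.trans c3 hw
  rw [← d1]
  simp only [hpt] at d3 ⊢
  refine final_lem hn hg Y hY p (fun j => f j • v' j) hpY (fun j => hpt j ▸ a1 j) d2 ?_
  intro a b
  have e := congrFun (congrFun d3 a) b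
  simp only [Finset.sum_apply, wf, LinearMap.coe_mk, AddHom.coe_mk, Pi.zero_apply] at e
  have za : ∑ j, a (f j • v' j) = 0 := by rw [← map_sum, d2, map_zero]
  have zb : ∑ j, b (f j • v' j) = 0 := by rw [← map_sum, d2, map_zero]
  have : ∑ j, (a (∑ x ∈ insert (p j) Y, x) * b (f j • v' j)
      - a (f j • v' j) * b (∑ x ∈ insert (p j) Y, x))
      = ∑ j, (a (p j) * b (f j • v' j) - a (f j • v' j) * b (p j))
        + (a (∑ x ∈ Y, x) * ∑ j, b (f j • v' j) - (∑ j, a (f j • v' j)) * b (∑ x ∈ Y, x)) := by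
    rw [Finset.mul_sum, Finset.sum_mul, ← Finset.sum_sub_distrib, ← Finset.sum_add_distrib]
    refine Finset.sum_congr rfl fun j _ => ?_
    rw [Finset.sum_insert (hpY j), map_add, map_add]
    ring
  rw [this, za, zb] at e
  simpa using e

lemma wedge_functional {n l : ℕ} (x v : Fin l → Euc n)
    (h : ∑ i, wedge (x i) (v i) = 0) : ∑ i, wf (x i) (v i) = 0 := by
  funext a b
  have ha : ∀ u : Euc n, ∀ a : Euc n →ₗ[ℝ] ℝ,
      a u = ∑ p, u p * a (EuclideanSpace.single p 1) := by
    intro u a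
    have e : u = ∑ p, u p • EuclideanSpace.single p (1 : ℝ) := by
      ext q
      simp [Finset.sum_apply, Pi.single_apply]
    conv_lhs => rw [e]
    simp [map_sum]
  have hpq : ∀ p q, ∑ i, (x i p * v i q - v i p * x i q) = 0 := by
    intro p q
    have := congrFun (congrFun h p) q
    simpa [Matrix.sum_apply, wedge] using this
  simp only [Finset.sum_apply, wf, LinearMap.coe_mk, AddHom.coe_mk, Pi.zero_apply]
  have : ∀ i, a (x i) * b (v i) - a (v i) * b (x i)
      = ∑ p, ∑ q, (x i p * v i q - v i p * x i q) *
        (a (EuclideanSpace.single p 1) * b (EuclideanSpace.single q 1)) := by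
    intro i
    rw [ha (x i) a, ha (v i) b, ha (v i) a, ha (x i) b, Finset.sum_mul_sum, Finset.sum_mul_sum,
      ← Finset.sum_sub_distrib]
    refine Finset.sum_congr rfl fun p _ => ?_
    rw [← Finset.sum_sub_distrib]
    exact Finset.sum_congr rfl fun q _ => by ring
  simp only [this]
  rw [Finset.sum_comm]
  refine Finset.sum_eq_zero fun p _ => ?_
  rw [Finset.sum_comm]
  refine Finset.sum_eq_zero fun q _ => ?_
  rw [← Finset.sum_mul, hpq, zero_mul]

open scoped Classical in
lemma main_beam {k' n l : ℕ} (hn : k' + 3 ≤ n)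
    (s : Fin l → Fin (k' + 1) → Euc n) (hs : ∀ i, AffineIndependent ℝ (s i))
    (F : Fin l → Euc n) (hequil : equil (k' : ℝ) s F) : IsBeamSum (k' + 2) (sys (k' : ℝ) s F) := by
  let t : Fin l → Finset (Euc n) := fun i => Finset.univ.image (s i)
  have htr : ∀ i, (t i : Set (Euc n)) = Set.range (s i) := fun i => by simp [t]
  have htc : ∀ i, (t i).card = k' + 1 := by
    intro i
    rw [Finset.card_image_of_injective _ (hs i).injective]; simp
  have htA : ∀ i, AI (t i) := by
    intro i
    have h := (hs i).range
    rw [← htr i] at h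
    exact h
  have hset : ∀ i, convexHull ℝ (t i : Set (Euc n)) = simplexSet (s i) := fun i => by
    rw [htr, simplexSet]
  let H : Fin l → ℝ := fun i => (μH[(k' : ℝ)] (simplexSet (s i))).toReal
  have hH : ∀ i, H i ≠ 0 := by
    intro i
    have hmem : s i 0 ∈ t i := Finset.mem_image_of_mem _ (Finset.mem_univ _)
    have hins : insert (s i 0) (((t i).erase (s i 0) : Finset (Euc n)) : Set (Euc n))
        = (t i : Set (Euc n)) := by
      rw [← Finset.coe_insert, Finset.insert_erase hmem]
    have h := meas_pos ((t i).erase (s i 0)) (s i 0) (by simp) (by rw [hins]; exact htA i)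
    rw [hins, hset, Finset.card_erase_of_mem hmem, htc] at h
    exact h.ne'
  let g : Finset (Euc n) → Euc n →ₗ[ℝ] ((Set (Euc n) → Euc n) ⧸ beamSub n k') :=
    fun t => (beamSub n k').mkQ ∘ₗ nforce k' t
  have hg : Moves k' g := by
    intro σ p q h1 h2 h3 h4 h5
    exact (Submodule.Quotient.eq _).mpr (beam_move σ p q h1 h2 h3 h4 h5)
  obtain ⟨q1, q2⟩ := hequil
  have hw : ∑ i, wedge (∑ x ∈ t i, x) (H i • F i) = 0 := by
    have e : ∀ i, wedge (∑ x ∈ t i, x) (H i • F i)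
        = ((k' : ℝ) + 1) • (H i • wedge (bary (s i)) (F i)) := by
      intro i
      have hb : ∑ x ∈ t i, x = ((k' : ℝ) + 1) • bary (s i) := by
        rw [Finset.sum_image (fun a _ b _ h => (hs i).injective h), bary, smul_smul,
          Fintype.card_fin]
        push_cast
        rw [mul_inv_cancel₀ (by positivity), one_smul]
      rw [hb]
      ext p q
      simp [wedge]
      ring
    simp only [e]
    rw [← Finset.smul_sum, q2, smul_zero]
  have key := combine hn hg t (fun i => H i • F i) htA htc q1 (wedge_functional _ _ hw)
  have hsys : ∑ i, nforce k' (t i) (H i • F i) = sys (k' : ℝ) s F := by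
    funext S
    rw [Finset.sum_apply]
    refine Finset.sum_congr rfl fun i _ => ?_
    change ((μH[(k' : ℝ)] (convexHull ℝ (t i : Set (Euc n)))).toReal⁻¹ *
      (μH[(k' : ℝ)] (S ∩ convexHull ℝ (t i : Set (Euc n)))).toReal) • (H i • F i) = _
    rw [hset, smul_smul]
    congr 1
    change (H i)⁻¹ * _ * H i = _
    rw [mul_comm, ← mul_assoc, mul_inv_cancel₀ (hH i), one_mul]
  have : sys (k' : ℝ) s F ∈ beamSub n k' := by
    rw [← hsys, ← Submodule.Quotient.mk_eq_zero, ← key]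
    simp only [g, LinearMap.comp_apply, ← map_sum]
    rfl
  exact this

/-- (Proposition 3.)  With `k = k' + 1 ≥ 1` and `n ≥ k + 2`, an
equilibrium system of arbitrary forces on arbitrary `(k−1)`-simplices of `ℝⁿ`
splits as `F = B + Fʰ`, with `B` a finite sum of `k`-beams and `Fʰ` an equilibrium
system whose simplices and forces all lie in the hyperplane `{x : ⟪x, eₙ⟫ = 0}`. -/
theorem statement7 {k' n l : ℕ} (hn : k' + 3 ≤ n)
    (en : Euc n) (hen : en = EuclideanSpace.single (⟨n - 1, by omega⟩ : Fin n) 1)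
    (s : Fin l → Fin (k' + 1) → Euc n) (hs : ∀ i, AffineIndependent ℝ (s i))
    (F : Fin l → Euc n)
    (hequil : equil (k' : ℝ) s F) :
    ∃ (B : Set (Euc n) → Euc n), IsBeamSum (k' + 2) B ∧
      ∃ (l₂ : ℕ) (s₂ : Fin l₂ → Fin (k' + 1) → Euc n) (F₂ : Fin l₂ → Euc n),
        (∀ i, AffineIndependent ℝ (s₂ i)) ∧
        (∀ i, simplexSet (s₂ i) ⊆ {x : Euc n | ⟪x, en⟫ = 0}) ∧
        (∀ i, ⟪F₂ i, en⟫ = 0) ∧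
        equil (k' : ℝ) s₂ F₂ ∧
        sys (k' : ℝ) s F = fun S => B S + sys (k' : ℝ) s₂ F₂ S := by
  refine ⟨sys (k' : ℝ) s F, main_beam hn s hs F hequil, 0, Fin.elim0, Fin.elim0,
    fun i => i.elim0, fun i => i.elim0, fun i => i.elim0, ?_, ?_⟩
  · exact ⟨by simp, by simp⟩
  · funext S
    simp [sys]

end
end
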